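/- arXiv:math/0204045 — 2 statements merged into one kernel-verified Lean document; each statement's English description precedes it below -/
import Mathlib

section
/- Let T be a triangulation of a finite point set A ⊂ ℝ² whose convex hull is two-dimensional. For each integer i ≥ 3 let v_i denote the number of interior vertices of T of degree i, and for each integer j ≥ 2 let b_j denote the number of boundary vertices of T of degree j. Then, as integers, ∑_{i≥3} (6−i)·v_i + ∑_{j≥2} (4−j)·b_j = 6 (the sums are finite since A is finite). -/
/-!
The proof sweeps the plane by a linear functional `f` (the height) that is injective on `A`. Let
`u` be the horizontal direction, `F` the number of triangles, `E` the number of edges, and `V_i`,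
`V_b` the numbers of interior and boundary vertices. Two counts of `F`, each of which charges a
triangle to one of its vertices, give the theorem.

* Charge a triangle to its middle vertex `p`. The triangles charged to `p` are those whose open
  cone at `p` contains `u` or `-u` (`inCone_of_mid`, `exists_mid_of_enters`), so there are as many
  as there are horizontal directions entering `conv A` at `p`: two if `p` is interior
  (`card_mid_interior`), one if `p` is on the boundary (`card_mid_boundary`), except that there are
  none at the lowest and the highest vertex. Hence `F = 2 V_i + V_b - 2`.
* Charge a triangle to its top vertex `p`. The triangles charged to `p` are the gaps between
  consecutive edges going down from `p`, so unless `p` is the lowest vertex there is one triangle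
  fewer than there are such edges (`card_top_add_one`). Hence `F = E - (V_i + V_b - 1)`.

Eliminating `F` gives `2 E = 6 V_i + 4 V_b - 6`, and `2 E` is the sum of the degrees
(`sum_degree_add_six`). It remains to see that the index ranges in the theorem miss no vertex, i.e.
that interior vertices have degree at least `3` and all vertices degree at least `2`
(`three_le_degree`, `two_le_degree`).

The local geometry rests on the fact that the open cones of the faces at a vertex are
pairwise disjoint (`InCone.unique`) and cover exactly the directions that enter `conv A`
(`exists_inCone`, `InCone.enters`).
-/

open Geometry

/-- The Euclidean plane `ℝ²`. -/
abbrev Plane : Type := EuclideanSpace ℝ (Fin 2)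

/-- A triangulation of a finite point set `A ⊆ ℝ²` (whose convex hull is two-dimensional):
a geometric simplicial complex all of whose faces have at most 3 elements, whose underlying
space is the convex hull of `A`, and whose vertex set is exactly `A`. -/
def IsTriangulation (A : Finset Plane) (T : SimplicialComplex ℝ Plane) : Prop :=
  (∀ s ∈ T.faces, s.card ≤ 3) ∧
  T.space = convexHull ℝ (A : Set Plane) ∧
  T.vertices = (A : Set Plane)

/-- The degree of a vertex `p` in a triangulation `T`: the number of edges
(faces with exactly 2 elements) of `T` containing `p`. -/
noncomputable def degree (T : SimplicialComplex ℝ Plane) (p : Plane) : ℕ :=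
  Nat.card {s : Finset Plane | s ∈ T.faces ∧ s.card = 2 ∧ p ∈ s}

section Euler

open scoped Classical
open Set Filter Topology

variable {A : Finset Plane} {T : SimplicialComplex ℝ Plane}

/-! ### Local structure of a triangulation at a vertex -/

/-- `d` lies in the relative interior of the cone at apex `p` spanned by the vectors `v - p`,
`v ∈ s`. The coefficient at `v = p` is irrelevant, since its term vanishes. -/
def InCone (p : Plane) (s : Finset Plane) (d : Plane) : Prop :=
  ∃ c : Plane → ℝ, (∀ v ∈ s, v ≠ p → 0 < c v) ∧ d = ∑ v ∈ s, c v • (v - p)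

/-- The direction `d` stays in the convex hull of `A` for a short while after leaving `p`
(for `p ∈ conv A` one positive time is enough, by convexity). -/
def Enters (A : Finset Plane) (p d : Plane) : Prop :=
  ∃ t : ℝ, 0 < t ∧ p + t • d ∈ convexHull ℝ (A : Set Plane)

/-- A face whose convex hull meets the relative interior of the face `s` contains `s`. -/
lemma subset_of_pos_combination {s s' : Finset Plane} (hs : s ∈ T.faces) (hs' : s' ∈ T.faces)
    (w : Plane → ℝ) (hw : ∀ v ∈ s, 0 < w v) (hw1 : ∑ v ∈ s, w v = 1)
    (hz : ∑ v ∈ s, w v • v ∈ convexHull ℝ (s' : Set Plane)) : s ⊆ s' := by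
  have hz1 : ∑ v ∈ s, w v • v ∈ convexHull ℝ (s : Set Plane) :=
    (convex_convexHull ℝ _).sum_mem (fun v hv => (hw v hv).le) hw1
      (fun v hv => subset_convexHull ℝ _ hv)
  have h2 := T.inter_subset_convexHull hs hs' ⟨hz1, hz⟩
  rw [← Finset.coe_inter, Finset.mem_convexHull'] at h2
  obtain ⟨w', hw'0, hw'1, hw'z⟩ := h2
  intro v hv
  by_contra hvs'
  have hind := T.indep hs
  rw [affineIndependent_iff] at hind
  let W : Plane → ℝ := fun x => w x - if x ∈ s' then w' x else 0
  have e1 : ∑ x ∈ s, W x = 0 := by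
    simp only [W, Finset.sum_sub_distrib, hw1, ← Finset.sum_filter, Finset.filter_mem_eq_inter,
      hw'1, sub_self]
  have e2 : ∑ x ∈ s, W x • x = 0 := by
    simp only [W, sub_smul, Finset.sum_sub_distrib, ite_smul, zero_smul, ← Finset.sum_filter,
      Finset.filter_mem_eq_inter, hw'z, sub_self]
  have := hind Finset.univ (fun x => W x) (by rw [← e1]; exact Finset.sum_coe_sort s W)
    (by rw [← e2]; exact Finset.sum_coe_sort s (fun x => W x • x)) ⟨v, hv⟩ (Finset.mem_univ _)
  simp only [W, hvs', if_false, sub_zero] at this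
  exact (hw v hv).ne' this

/-- A short step from `p` in a direction of the cone of `s` leads into the relative interior
of `s`. -/
lemma InCone.exists_weights {p d : Plane} {s : Finset Plane} (hp : p ∈ s) (h : InCone p s d) :
    ∃ t₀ : ℝ, 0 < t₀ ∧ ∀ t, 0 < t → t ≤ t₀ → ∃ w : Plane → ℝ, (∀ v ∈ s, 0 < w v) ∧
      ∑ v ∈ s, w v = 1 ∧ ∑ v ∈ s, w v • v = p + t • d := by
  obtain ⟨c, hc, rfl⟩ := h
  have hC : 0 ≤ ∑ v ∈ s.erase p, c v := Finset.sum_nonneg fun v hv =>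
    (hc v (Finset.mem_of_mem_erase hv) (Finset.ne_of_mem_erase hv)).le
  set C := ∑ v ∈ s.erase p, c v with hCdef
  refine ⟨1 / (1 + C), by positivity, fun t ht htt => ?_⟩
  have htC : t * C < 1 := by
    rw [le_div_iff₀ (by positivity)] at htt
    linarith
  have e : ∑ v ∈ s.erase p, (if v = p then 1 - t * C else t * c v) = t * C := by
    rw [hCdef, Finset.mul_sum]
    exact Finset.sum_congr rfl fun v hv => by simp [Finset.ne_of_mem_erase hv]
  have e2 : ∑ v ∈ s.erase p, (if v = p then 1 - t * C else t * c v) • v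
      = ∑ v ∈ s.erase p, (t * c v) • v :=
    Finset.sum_congr rfl fun v hv => by simp [Finset.ne_of_mem_erase hv]
  refine ⟨fun v => if v = p then 1 - t * C else t * c v, fun v hv => ?_, ?_, ?_⟩
  · by_cases h : v = p
    · simp only [h, if_true]; linarith
    · simp only [h, if_false]; exact mul_pos ht (hc v hv h)
  · rw [← Finset.add_sum_erase s _ hp, e]; simp
  · rw [← Finset.add_sum_erase s _ hp, e2, ← Finset.add_sum_erase s (fun v => c v • (v - p)) hp]
    simp only [if_true, sub_self, smul_zero, zero_add, smul_sub, Finset.sum_sub_distrib,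
      Finset.smul_sum, smul_smul, ← Finset.sum_smul]
    rw [← hCdef, sub_smul, one_smul]
    abel

/-- The open cones of the faces at a vertex are pairwise disjoint. -/
lemma InCone.unique {p d : Plane} {s s' : Finset Plane} (hs : s ∈ T.faces) (hs' : s' ∈ T.faces)
    (hp : p ∈ s) (hp' : p ∈ s') (h : InCone p s d) (h' : InCone p s' d) : s = s' := by
  obtain ⟨t₁, ht₁, H₁⟩ := h.exists_weights hp
  obtain ⟨t₂, ht₂, H₂⟩ := h'.exists_weights hp'
  obtain ⟨w, hw, hw1, hwz⟩ := H₁ (min t₁ t₂) (lt_min ht₁ ht₂) (min_le_left _ _)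
  obtain ⟨w', hw', hw'1, hw'z⟩ := H₂ (min t₁ t₂) (lt_min ht₁ ht₂) (min_le_right _ _)
  apply Finset.Subset.antisymm
  · refine subset_of_pos_combination hs hs' w hw hw1 ?_
    rw [hwz, ← hw'z]
    exact (convex_convexHull ℝ _).sum_mem (fun v hv => (hw' v hv).le) hw'1
      (fun v hv => subset_convexHull ℝ _ hv)
  · refine subset_of_pos_combination hs' hs w' hw' hw'1 ?_
    rw [hw'z, ← hwz]
    exact (convex_convexHull ℝ _).sum_mem (fun v hv => (hw v hv).le) hw1
      (fun v hv => subset_convexHull ℝ _ hv)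

lemma InCone.smul {p d : Plane} {s : Finset Plane} {k : ℝ} (hk : 0 < k) (h : InCone p s d) :
    InCone p s (k • d) := by
  obtain ⟨c, hc, rfl⟩ := h
  exact ⟨fun v => k * c v, fun v hv hvp => mul_pos hk (hc v hv hvp), by
    simp [Finset.smul_sum, smul_smul]⟩

lemma InCone.add {p d d' : Plane} {s : Finset Plane} (h : InCone p s d) (h' : InCone p s d') :
    InCone p s (d + d') := by
  obtain ⟨c, hc, rfl⟩ := h
  obtain ⟨c', hc', rfl⟩ := h'
  exact ⟨fun v => c v + c' v, fun v hv hvp => add_pos (hc v hv hvp) (hc' v hv hvp), by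
    simp [add_smul, Finset.sum_add_distrib]⟩

lemma inCone_pair {p v : Plane} (hv : v ≠ p) {c : ℝ} (hc : 0 < c) :
    InCone p {p, v} (c • (v - p)) :=
  ⟨fun _ => c, fun _ _ _ => hc, by rw [Finset.sum_pair hv.symm]; simp⟩

lemma inCone_triple {p v w : Plane} (hv : v ≠ p) (hw : w ≠ p) (hvw : v ≠ w) {a b : ℝ}
    (ha : 0 < a) (hb : 0 < b) : InCone p {p, v, w} (a • (v - p) + b • (w - p)) :=
  ⟨fun x => if x = v then a else b, fun x _ _ => by dsimp only; split_ifs <;> assumption, by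
    rw [Finset.sum_insert (by simp [hv.symm, hw.symm]), Finset.sum_pair hvw]
    simp [hvw.symm]⟩

/-- The cone of a nondegenerate face at a vertex is pointed. -/
lemma InCone.eq_singleton {p : Plane} {s : Finset Plane} (hs : s ∈ T.faces) (hp : p ∈ s)
    (h : InCone p s 0) : s = {p} :=
  h.unique hs (T.down_closed hs (Finset.singleton_subset_iff.2 hp) (Finset.singleton_nonempty p))
    hp (Finset.mem_singleton_self p) ⟨fun _ => 1, fun _ _ _ => one_pos, by simp⟩

lemma card_three_of_mem {p v w : Plane} {s : Finset Plane} (hs : s.card ≤ 3) (hp : p ∈ s)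
    (hv : v ∈ s) (hw : w ∈ s) (hvp : v ≠ p) (hwp : w ≠ p) (hvw : v ≠ w) : s = {p, v, w} := by
  symm
  apply Finset.eq_of_subset_of_card_le
  · intro x hx
    simp only [Finset.mem_insert, Finset.mem_singleton] at hx
    rcases hx with rfl | rfl | rfl <;> assumption
  · rw [Finset.card_insert_of_notMem (by simp [hvp.symm, hwp.symm]), Finset.card_pair hvw]
    exact hs

/-- Faces at a vertex `p` with at most three vertices, by dimension. -/
lemma face_cases {p : Plane} {s : Finset Plane} (hs : s.card ≤ 3) (hp : p ∈ s) :
    s = {p} ∨ (∃ v, v ≠ p ∧ s = {p, v}) ∨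
      ∃ v w, v ≠ p ∧ w ≠ p ∧ v ≠ w ∧ s = {p, v, w} := by
  by_cases h1 : ∃ v ∈ s, v ≠ p
  · obtain ⟨v, hv, hvp⟩ := h1
    by_cases h2 : ∃ w ∈ s, w ≠ p ∧ w ≠ v
    · obtain ⟨w, hw, hwp, hwv⟩ := h2
      exact Or.inr (Or.inr ⟨v, w, hvp, hwp, hwv.symm,
        card_three_of_mem hs hp hv hw hvp hwp hwv.symm⟩)
    · push Not at h2
      refine Or.inr (Or.inl ⟨v, hvp, ?_⟩)
      ext x
      simp only [Finset.mem_insert, Finset.mem_singleton]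
      refine ⟨fun hx => ?_, ?_⟩
      · by_cases hxp : x = p
        · exact Or.inl hxp
        · exact Or.inr (h2 x hx hxp)
      · rintro (rfl | rfl) <;> assumption
  · push Not at h1
    left
    ext x
    simp only [Finset.mem_singleton]
    exact ⟨h1 x, fun h => h ▸ hp⟩

lemma InCone.pair_iff {p v d : Plane} (hv : v ≠ p) (h : InCone p {p, v} d) :
    ∃ c : ℝ, 0 < c ∧ d = c • (v - p) := by
  obtain ⟨c, hc, rfl⟩ := h
  refine ⟨c v, hc v (by simp) hv, ?_⟩
  rw [Finset.sum_pair hv.symm]; simp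

lemma InCone.triple_iff {p v w d : Plane} (hv : v ≠ p) (hw : w ≠ p) (hvw : v ≠ w)
    (h : InCone p {p, v, w} d) :
    ∃ a b : ℝ, 0 < a ∧ 0 < b ∧ d = a • (v - p) + b • (w - p) := by
  obtain ⟨c, hc, rfl⟩ := h
  refine ⟨c v, c w, hc v (by simp) hv, hc w (by simp) hw, ?_⟩
  rw [Finset.sum_insert (by simp [hv.symm, hw.symm]), Finset.sum_pair hvw]; simp

lemma face_subset (hT : IsTriangulation A T) {s : Finset Plane} (hs : s ∈ T.faces) : s ⊆ A := by
  intro x hx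
  have : x ∈ T.vertices := T.down_closed hs (Finset.singleton_subset_iff.2 hx)
    (Finset.singleton_nonempty x)
  rw [hT.2.2] at this
  exact this

lemma mem_vertices (hT : IsTriangulation A T) {p : Plane} (hp : p ∈ A) : p ∈ T.vertices := by
  rw [hT.2.2]; exact hp

lemma faces_finite (hT : IsTriangulation A T) : T.faces.Finite :=
  (Finset.finite_toSet A.powerset).subset fun _ hs => by
    simpa using face_subset hT hs

/-- A segment in `conv A` starting at `q` begins within a single face: finitely many closed faces
cover it, so one of them contains points of the segment arbitrarily close to `q`. -/
lemma exists_face_along (hT : IsTriangulation A T) {q d : Plane}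
    (hq : q ∈ convexHull ℝ (A : Set Plane)) (hd : Enters A q d) :
    ∃ s ∈ T.faces, q ∈ convexHull ℝ (s : Set Plane) ∧
      ∃ t : ℝ, 0 < t ∧ q + t • d ∈ convexHull ℝ (s : Set Plane) := by
  obtain ⟨t₀, ht₀, hmem⟩ := hd
  have hpt : ∀ n : ℕ, ∃ s : T.faces, q + (t₀ / (n + 1)) • d ∈ convexHull ℝ ((s : Finset Plane) : Set Plane) := by
    intro n
    have hn : (0 : ℝ) < n + 1 := by positivity
    have : q + (t₀ / (n + 1)) • d ∈ convexHull ℝ (A : Set Plane) := by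
      have := (convex_convexHull ℝ (A : Set Plane)).add_smul_sub_mem hq hmem
        (t := 1 / ((n : ℝ) + 1)) ⟨by positivity, by rw [div_le_one hn]; linarith [n.cast_nonneg (α := ℝ)]⟩
      simpa [smul_smul, div_eq_mul_inv, mul_comm] using this
    rw [← hT.2.1, SimplicialComplex.mem_space_iff] at this
    obtain ⟨s, hs, h⟩ := this
    exact ⟨⟨s, hs⟩, h⟩
  choose S hS using hpt
  have : Finite T.faces := (faces_finite hT).to_subtype
  obtain ⟨s, hs⟩ := Finite.exists_infinite_fiber S
  have hfr : ∃ᶠ n in atTop, S n = s :=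
    Nat.frequently_atTop_iff_infinite.2 (Set.infinite_coe_iff.1 hs)
  refine ⟨s, s.2, ?_, ?_⟩
  · have hcl : IsClosed (convexHull ℝ ((s : Finset Plane) : Set Plane)) :=
      (Finset.finite_toSet _).isClosed_convexHull ℝ
    have ht : Tendsto (fun n : ℕ => q + (t₀ / ((n : ℝ) + 1)) • d) atTop (𝓝 q) := by
      have h0 : Tendsto (fun n : ℕ => t₀ / ((n : ℝ) + 1)) atTop (𝓝 0) := by
        have := (tendsto_one_div_add_atTop_nhds_zero_nat (𝕜 := ℝ)).const_mul t₀
        simpa [div_eq_mul_inv] using this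
      simpa using (h0.smul_const d).const_add q
    exact hcl.mem_of_frequently_of_tendsto (hfr.mono fun n hn => by rw [← hn]; exact hS n) ht
  · obtain ⟨n, hn⟩ := hfr.exists
    exact ⟨t₀ / (n + 1), by positivity, by rw [← hn]; exact hS n⟩

/-- The open cones of the faces at a vertex cover all directions that enter `conv A`. -/
lemma exists_inCone (hT : IsTriangulation A T) {p d : Plane} (hp : p ∈ A) (hd : Enters A p d) :
    ∃ s ∈ T.faces, p ∈ s ∧ InCone p s d := by
  obtain ⟨s, hs, hps, t, ht, hmem⟩ := exists_face_along hT (subset_convexHull ℝ _ hp) hd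
  rw [SimplicialComplex.vertex_mem_convexHull_iff (mem_vertices hT hp) hs] at hps
  rw [Finset.mem_convexHull'] at hmem
  obtain ⟨w, hw0, hw1, hwz⟩ := hmem
  refine ⟨s.filter fun v => v = p ∨ 0 < w v, T.down_closed hs (Finset.filter_subset _ _)
    ⟨p, by simp [hps]⟩, by simp [hps], fun v => t⁻¹ * w v, ?_, ?_⟩
  · intro v hv hvp
    have := (Finset.mem_filter.1 hv).2.resolve_left hvp
    positivity
  · rw [Finset.sum_filter_of_ne]
    · simp only [mul_smul, ← Finset.smul_sum, smul_sub, Finset.sum_sub_distrib, hwz,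
        ← Finset.sum_smul, hw1]
      rw [one_smul, smul_add, add_sub_cancel_left, smul_smul, inv_mul_cancel₀ ht.ne', one_smul]
    · intro v hv hne
      by_contra hcon
      push Not at hcon
      have h0 : w v = 0 := le_antisymm hcon.2 (hw0 v hv)
      simp [h0] at hne

lemma InCone.enters (hT : IsTriangulation A T) {p d : Plane} {s : Finset Plane} (hs : s ∈ T.faces)
    (hp : p ∈ s) (h : InCone p s d) : Enters A p d := by
  obtain ⟨t, ht, H⟩ := h.exists_weights hp
  obtain ⟨w, hw, hw1, hwz⟩ := H t ht le_rfl
  refine ⟨t, ht, ?_⟩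
  rw [← hwz]
  exact (convex_convexHull ℝ _).sum_mem (fun v hv => (hw v hv).le) hw1
      (fun v hv => subset_convexHull ℝ _ (face_subset hT hs hv))

lemma edge_of_face {p v : Plane} {s : Finset Plane} (hs : s ∈ T.faces) (hp : p ∈ s) (hv : v ∈ s) :
    {p, v} ∈ T.faces :=
  T.down_closed hs (by intro x hx; simp at hx; rcases hx with rfl | rfl <;> assumption)
    (by simp)

/-! ### Sweeping the plane by a generic linear functional -/

/-- Linear coordinates `(g, f)` on the plane in which the height `f` separates the points of `A`;
`u` is the horizontal unit vector. -/
structure Sweep (A : Finset Plane) where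
  /-- the height -/
  f : Plane →ₗ[ℝ] ℝ
  /-- the horizontal coordinate -/
  g : Plane →ₗ[ℝ] ℝ
  /-- the horizontal direction -/
  u : Plane
  f_u : f u = 0
  g_u : g u = 1
  eq_zero : ∀ x, f x = 0 → g x = 0 → x = 0
  inj : ∀ x ∈ A, ∀ y ∈ A, f x = f y → x = y

lemma exists_sweep (A : Finset Plane) : Nonempty (Sweep A) := by
  -- The height is `x₁ - κ x₀`, where `κ` is not the slope of a line through two points of `A`.
  obtain ⟨κ, hκ⟩ := ((A ×ˢ A).image
    fun z : Plane × Plane => (z.1 1 - z.2 1) / (z.1 0 - z.2 0)).exists_notMem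
  let p0 : Plane →ₗ[ℝ] ℝ := (EuclideanSpace.proj (0 : Fin 2) : Plane →L[ℝ] ℝ)
  let p1 : Plane →ₗ[ℝ] ℝ := (EuclideanSpace.proj (1 : Fin 2) : Plane →L[ℝ] ℝ)
  have h0 : ∀ x, p0 x = x 0 := fun x => rfl
  have h1 : ∀ x, p1 x = x 1 := fun x => rfl
  refine ⟨⟨p1 - κ • p0, p0, !₂[1, κ], by simp [h0, h1], by simp [h0], ?_, ?_⟩⟩
  · intro x hf hg
    simp only [LinearMap.sub_apply, LinearMap.smul_apply, hg, h1, smul_zero, sub_zero] at hf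
    rw [h0] at hg
    ext i
    fin_cases i
    · simpa using hg
    · simpa using hf
  · intro x hx y hy hxy
    simp only [LinearMap.sub_apply, LinearMap.smul_apply, h0, h1, smul_eq_mul] at hxy
    by_cases h : x 0 - y 0 = 0
    · ext i
      fin_cases i
      · simp; linarith
      · have : x 0 = y 0 := by linarith
        rw [this] at hxy
        simp; linarith
    · exfalso
      apply hκ
      rw [Finset.mem_image]
      refine ⟨(x, y), Finset.mem_product.2 ⟨hx, hy⟩, ?_⟩
      rw [div_eq_iff h]
      linarith

namespace Sweep

variable (S : Sweep A)

/-- The determinant of two vectors in the coordinates of the sweep. -/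
def det (x y : Plane) : ℝ := S.f x * S.g y - S.g x * S.f y

lemma ext {x y : Plane} (hf : S.f x = S.f y) (hg : S.g x = S.g y) : x = y := by
  rw [← sub_eq_zero]
  exact S.eq_zero _ (by rw [map_sub, hf, sub_self]) (by rw [map_sub, hg, sub_self])

lemma eq_smul_u {x : Plane} (h : S.f x = 0) : x = S.g x • S.u :=
  S.ext (by simp [h, S.f_u]) (by simp [S.g_u])

/-- Cramer's rule. -/
lemma cramer {x y : Plane} (h : S.det x y ≠ 0) (z : Plane) :
    z = (S.det z y / S.det x y) • x + (S.det x z / S.det x y) • y := by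
  apply S.ext
  · simp only [map_add, map_smul, smul_eq_mul]
    field_simp
    simp only [det]; ring
  · simp only [map_add, map_smul, smul_eq_mul]
    field_simp
    simp only [det]; ring

lemma exists_smul_of_det_eq_zero {x y : Plane} (hx : S.f x ≠ 0) (h : S.det x y = 0) :
    y = (S.f y / S.f x) • x := by
  apply S.ext
  · simp only [map_smul, smul_eq_mul]; field_simp
  · simp only [map_smul, smul_eq_mul]; field_simp
    simp only [det] at h; linarith

lemma f_ne {p v : Plane} (hp : p ∈ A) (hv : v ∈ A) (h : v ≠ p) : S.f (v - p) ≠ 0 := by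
  rw [map_sub, sub_ne_zero]
  exact fun e => h (S.inj _ hv _ hp e)

/-- A linear functional constant on a set that affinely spans the plane vanishes. -/
lemma linearMap_eq_zero (hdim : affineSpan ℝ (A : Set Plane) = ⊤) (h : Plane →ₗ[ℝ] ℝ) (p : Plane)
    (hA : ∀ q ∈ A, h (q - p) = 0) : h = 0 := by
  have hle : affineSpan ℝ (A : Set Plane) ≤ AffineSubspace.mk' p (LinearMap.ker h) := by
    rw [affineSpan_le]
    intro q hq
    simpa [AffineSubspace.mem_mk'] using hA q hq
  rw [hdim] at hle
  ext x
  have := hle (AffineSubspace.mem_top ℝ Plane (x + p))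
  simpa [AffineSubspace.mem_mk'] using this

/-- `p` is the highest vertex of `s`. -/
def IsTop (p : Plane) (s : Finset Plane) : Prop := p ∈ s ∧ ∀ v ∈ s, S.f v ≤ S.f p

/-- `p` is strictly between a lower and a higher vertex of `s`. -/
def IsMid (p : Plane) (s : Finset Plane) : Prop :=
  p ∈ s ∧ (∃ v ∈ s, S.f v < S.f p) ∧ ∃ w ∈ s, S.f p < S.f w

end Sweep

/-- The triangles of `T`. -/
noncomputable def tris (A : Finset Plane) (T : SimplicialComplex ℝ Plane) :
    Finset (Finset Plane) :=
  A.powerset.filter fun s => s ∈ T.faces ∧ s.card = 3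

/-- The neighbours of the vertex `p` in the graph of `T`. -/
noncomputable def nbr (A : Finset Plane) (T : SimplicialComplex ℝ Plane) (p : Plane) :
    Finset Plane :=
  A.filter fun v => v ≠ p ∧ {p, v} ∈ T.faces

lemma mem_tris (hT : IsTriangulation A T) {s : Finset Plane} :
    s ∈ tris A T ↔ s ∈ T.faces ∧ s.card = 3 := by
  simp only [tris, Finset.mem_filter, Finset.mem_powerset, and_iff_right_iff_imp]
  exact fun h => face_subset hT h.1

lemma mem_nbr {p v : Plane} (hT : IsTriangulation A T) :
    v ∈ nbr A T p ↔ v ≠ p ∧ {p, v} ∈ T.faces := by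
  simp only [nbr, Finset.mem_filter, and_iff_right_iff_imp]
  exact fun h => face_subset hT h.2 (by simp)

lemma degree_eq_card_nbr (hT : IsTriangulation A T) (p : Plane) :
    degree T p = (nbr A T p).card := by
  have : {s : Finset Plane | s ∈ T.faces ∧ s.card = 2 ∧ p ∈ s} =
      (((nbr A T p).image fun v => ({p, v} : Finset Plane)) : Set (Finset Plane)) := by
    ext s
    simp only [Set.mem_ofPred_eq, Finset.coe_image, Set.mem_image, Finset.mem_coe, mem_nbr hT]
    constructor
    · rintro ⟨hs, hc, hp⟩
      rcases face_cases (by omega) hp with rfl | ⟨v, hv, rfl⟩ | ⟨v, w, hv, hw, hvw, rfl⟩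
      · simp at hc
      · exact ⟨v, ⟨hv, hs⟩, rfl⟩
      · rw [Finset.card_insert_of_notMem (by simp [hv.symm, hw.symm]), Finset.card_pair hvw] at hc
        omega
    · rintro ⟨v, ⟨hv, hs⟩, rfl⟩
      exact ⟨hs, Finset.card_pair hv.symm, by simp⟩
  rw [degree, this, Nat.card_coe_set_eq, Set.ncard_coe_finset, Finset.card_image_of_injOn]
  intro v hv w hw hvw
  have hv' := ((mem_nbr hT).1 hv).1
  have : v ∈ ({p, w} : Finset Plane) := by
    have : v ∈ ({p, v} : Finset Plane) := by simp
    simpa only [hvw] using this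
  simp only [Finset.mem_insert, Finset.mem_singleton] at this
  exact this.resolve_left hv'

/-! ### Triangles below a vertex -/

/-- An edge `pv` has a triangle on the side of `w` as soon as `pvw` is nondegenerate and contained
in `conv A`. -/
lemma exists_triangle_beside (hT : IsTriangulation A T) (S : Sweep A) {p v w : Plane}
    (hp : p ∈ A) (hw : w ∈ A) (hv : v ∈ nbr A T p) (hdet : 0 < S.det (v - p) (w - p)) :
    ∃ s ∈ tris A T, ∃ (x : Plane) (α β : ℝ), s = {p, v, x} ∧ x ≠ p ∧ x ≠ v ∧
      w - p = α • (v - p) + β • (x - p) ∧ 0 < β := by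
  obtain ⟨hvp, hpv⟩ := (mem_nbr hT).1 hv
  have hvA : v ∈ A := face_subset hT hpv (by simp)
  have hC := convex_convexHull ℝ (A : Set Plane)
  have memC : ∀ x ∈ A, x ∈ convexHull ℝ (A : Set Plane) := fun x hx => subset_convexHull ℝ _ hx
  -- Step from the midpoint of `pv` towards the midpoint of `vw`.
  obtain ⟨s, hs, hq, t, ht, hmem⟩ := exists_face_along hT (q := (1 / 2 : ℝ) • p + (1 / 2 : ℝ) • v)
    (d := w - p) (hC (memC p hp) (memC v hvA) (by norm_num) (by norm_num) (by norm_num))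
    ⟨1 / 2, by norm_num, by
      have := hC (memC v hvA) (memC w hw) (a := 1 / 2) (b := 1 / 2) (by norm_num) (by norm_num)
        (by norm_num)
      convert this using 1
      module⟩
  have hsub : ({p, v} : Finset Plane) ⊆ s := by
    refine subset_of_pos_combination hpv hs (fun _ => 1 / 2) (fun _ _ => by norm_num) ?_ ?_
    · rw [Finset.sum_pair hvp.symm]; norm_num
    · rw [Finset.sum_pair hvp.symm]; exact hq
  have hps : p ∈ s := hsub (by simp)
  have hvs : v ∈ s := hsub (by simp)
  rw [Finset.mem_convexHull'] at hmem
  obtain ⟨c, hc0, hc1, hcz⟩ := hmem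
  rcases face_cases (hT.1 s hs) hps with rfl | ⟨y, hyp, rfl⟩ | ⟨a, b, hap, hbp, hab, hsab⟩
  · exact absurd (Finset.mem_singleton.1 hvs) hvp
  · exfalso
    have hvy : v = y := by simpa [hvp] using hvs
    subst hvy
    rw [Finset.sum_pair hvp.symm] at hc1 hcz
    have hcp : c p = 1 - c v := by linarith
    have e : t • (w - p) = (c v - 1 / 2) • (v - p) := by
      rw [hcp] at hcz
      rw [← sub_eq_zero] at hcz ⊢
      rw [← neg_eq_zero, ← hcz]
      module
    have e2 : S.det (v - p) (t • (w - p)) = 0 := by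
      rw [e]; simp only [Sweep.det, map_smul, smul_eq_mul]; ring
    have e3 : S.det (v - p) (t • (w - p)) = t * S.det (v - p) (w - p) := by
      simp only [Sweep.det, map_smul, smul_eq_mul]; ring
    have := mul_pos ht hdet
    linarith
  · obtain ⟨x, hxs, hxp, hxv⟩ : ∃ x ∈ s, x ≠ p ∧ x ≠ v := by
      by_cases h : a = v
      · exact ⟨b, by simp [hsab], hbp, fun e => hab (h.trans e.symm)⟩
      · exact ⟨a, by simp [hsab], hap, h⟩
    have hse := card_three_of_mem (hT.1 s hs) hps hvs hxs hvp hxp hxv.symm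
    have hcard : s.card = 3 := by
      rw [hse, Finset.card_insert_of_notMem (by simp [hvp.symm, hxp.symm]),
        Finset.card_pair hxv.symm]
    subst hse
    have hpn : p ∉ ({v, x} : Finset Plane) := by simp [hvp.symm, hxp.symm]
    rw [Finset.sum_insert hpn, Finset.sum_pair hxv.symm] at hc1 hcz
    have hcp : c p = 1 - c v - c x := by linarith
    have e : t • (w - p) = (c v - 1 / 2) • (v - p) + c x • (x - p) := by
      rw [hcp] at hcz
      rw [← sub_eq_zero] at hcz ⊢
      rw [← neg_eq_zero, ← hcz]
      module
    have e2 : w - p = (t⁻¹ * (c v - 1 / 2)) • (v - p) + (t⁻¹ * c x) • (x - p) := by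
      rw [mul_smul, mul_smul, ← smul_add, ← e, smul_smul, inv_mul_cancel₀ ht.ne', one_smul]
    refine ⟨_, (mem_tris hT).2 ⟨hs, hcard⟩, x, _, _, rfl, hxp, hxv, e2, ?_⟩
    have hcx : 0 ≤ c x := hc0 x hxs
    rcases hcx.eq_or_lt with h0 | h0
    · exfalso
      rw [← h0] at e2
      have : S.det (v - p) (w - p) = 0 := by
        rw [e2]; simp only [Sweep.det, map_add, map_smul, smul_eq_mul]; ring
      linarith
    · positivity

/-- Two triangles on the same side of an edge `pv` coincide. -/
lemma triangle_beside_unique {S : Sweep A} {p v x x' : Plane} (hv : v ≠ p)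
    (h : {p, v, x} ∈ T.faces) (h' : {p, v, x'} ∈ T.faces)
    (hx : 0 < S.det (v - p) (x - p)) (hx' : 0 < S.det (v - p) (x' - p)) :
    ({p, v, x} : Finset Plane) = {p, v, x'} := by
  have ne : ∀ y, 0 < S.det (v - p) (y - p) → y ≠ p ∧ v ≠ y := by
    intro y hy
    constructor
    · rintro rfl; simp [Sweep.det] at hy
    · rintro rfl; simp [Sweep.det, mul_comm] at hy
  -- The vector `K (v - p) + (x - p)` lies in both open cones once `K` is large.
  have hcr := S.cramer hx'.ne' (x - p)
  set α := S.det (x - p) (x' - p) / S.det (v - p) (x' - p)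
  have hβ : 0 < S.det (v - p) (x - p) / S.det (v - p) (x' - p) := div_pos hx hx'
  set β := S.det (v - p) (x - p) / S.det (v - p) (x' - p)
  have c1 := inCone_triple (p := p) hv (ne x hx).1 (ne x hx).2
    (a := |α| + 1) (b := 1) (by positivity) one_pos
  have c2 := inCone_triple (p := p) hv (ne x' hx').1 (ne x' hx').2
    (a := |α| + 1 + α) (b := β) (by linarith [neg_abs_le α]) hβ
  refine c1.unique h h' (by simp) (by simp) ?_
  convert c2 using 1
  rw [one_smul, hcr]
  module

/-- Two lower edges at `p` in the same direction coincide. -/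
lemma eq_of_det_eq_zero (hT : IsTriangulation A T) (S : Sweep A) {p v w : Plane}
    (hv : v ∈ nbr A T p) (hw : w ∈ nbr A T p) (hfv : S.f v < S.f p) (hfw : S.f w < S.f p)
    (h : S.det (v - p) (w - p) = 0) : v = w := by
  obtain ⟨hvp, hvF⟩ := (mem_nbr hT).1 hv
  obtain ⟨hwp, hwF⟩ := (mem_nbr hT).1 hw
  have h1 : S.f (v - p) < 0 := by rw [map_sub]; linarith
  have h2 : S.f (w - p) < 0 := by rw [map_sub]; linarith
  have e := S.exists_smul_of_det_eq_zero h1.ne h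
  have c1 := inCone_pair hvp (div_pos_of_neg_of_neg h2 h1)
  rw [← e] at c1
  have c2 := inCone_pair hwp one_pos
  rw [one_smul] at c2
  have hE := c1.unique hvF hwF (by simp) (by simp) c2
  have : v ∈ ({p, w} : Finset Plane) := by rw [← hE]; simp
  simpa [hvp] using this

/-- The lower neighbours of `p`. -/
noncomputable def lowNbr (T : SimplicialComplex ℝ Plane) (S : Sweep A) (p : Plane) :
    Finset Plane :=
  (nbr A T p).filter fun v => S.f v < S.f p

lemma lowNbr_nonempty (hT : IsTriangulation A T) (S : Sweep A) {p q : Plane} (hp : p ∈ A)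
    (hq : q ∈ A) (hqp : S.f q < S.f p) : (lowNbr T S p).Nonempty := by
  obtain ⟨s, hs, hps, hcone⟩ := exists_inCone hT hp (d := q - p)
    ⟨1, one_pos, by simpa using subset_convexHull ℝ _ hq⟩
  obtain ⟨c, hc, hsum⟩ := hcone
  have hneg : ∑ v ∈ s, c v * S.f (v - p) < 0 := by
    have : S.f (q - p) < 0 := by rw [map_sub]; linarith
    rw [hsum, map_sum] at this
    simpa using this
  obtain ⟨v, hv, hlt⟩ := Finset.exists_lt_of_sum_lt (f := fun v => c v * S.f (v - p))
    (g := fun _ => (0 : ℝ)) (s := s) (by simpa using hneg)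
  have hvp : v ≠ p := by rintro rfl; simp at hlt
  have := hc v hv hvp
  have h2 : S.f (v - p) < 0 := by
    by_contra hcon
    push Not at hcon
    have := mul_nonneg this.le hcon
    linarith
  rw [map_sub] at h2
  exact ⟨v, Finset.mem_filter.2 ⟨(mem_nbr hT).2 ⟨hvp, edge_of_face hs hps hv⟩, by linarith⟩⟩

lemma mem_lowNbr_of_top (hT : IsTriangulation A T) (S : Sweep A) {p v : Plane} {s : Finset Plane}
    (hs : s ∈ T.faces) (hp : S.IsTop p s) (hv : v ∈ s) (hvp : v ≠ p) : v ∈ lowNbr T S p := by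
  refine Finset.mem_filter.2 ⟨(mem_nbr hT).2 ⟨hvp, edge_of_face hs hp.1 hv⟩,
    lt_of_le_of_ne (hp.2 v hv) fun e => hvp ?_⟩
  exact S.inj _ (face_subset hT hs hv) _ (face_subset hT hs hp.1) e

/-- Below a vertex `p` that is not the lowest one, the triangles with top `p` are the gaps between
consecutive lower edges: each is matched with its right edge, and only the leftmost lower edge
stays unmatched. -/
lemma card_top_add_one (hT : IsTriangulation A T) (S : Sweep A) {p q : Plane} (hp : p ∈ A)
    (hq : q ∈ A) (hqp : S.f q < S.f p) :
    ((tris A T).filter (S.IsTop p)).card + 1 = (lowNbr T S p).card := by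
  let m : Plane → ℝ := fun v => S.g (v - p) / (-S.f (v - p))
  have hm : ∀ v w, v ∈ lowNbr T S p → w ∈ lowNbr T S p →
      (m w < m v ↔ 0 < S.det (v - p) (w - p)) := by
    intro v w hv hw
    have h1 : 0 < -S.f (v - p) := by rw [map_sub]; linarith [(Finset.mem_filter.1 hv).2]
    have h2 : 0 < -S.f (w - p) := by rw [map_sub]; linarith [(Finset.mem_filter.1 hw).2]
    simp only [m]
    rw [div_lt_div_iff₀ h2 h1, Sweep.det]
    constructor <;> intro <;> linarith
  obtain ⟨v₀, hv₀, hmin⟩ := (lowNbr T S p).exists_min_image m (lowNbr_nonempty hT S hp hq hqp)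
  rw [← Finset.card_erase_add_one hv₀]
  congr 1
  let R : Plane → Finset Plane → Prop := fun v s => v ∈ s ∧ ∃ x ∈ s, 0 < S.det (v - p) (x - p)
  have hR : ∀ v s, s ∈ tris A T → p ∈ s → R v s → ∃ x ∈ s, v ≠ p ∧ x ≠ p ∧ v ≠ x ∧
      0 < S.det (v - p) (x - p) ∧ s = {p, v, x} := by
    rintro v s hs hps ⟨hv, x, hx, hd⟩
    have h1 : v ≠ p := by rintro rfl; simp [Sweep.det] at hd
    have h2 : x ≠ p := by rintro rfl; simp [Sweep.det] at hd
    have h3 : v ≠ x := by rintro rfl; simp [Sweep.det, mul_comm] at hd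
    exact ⟨x, hx, h1, h2, h3, hd, card_three_of_mem ((mem_tris hT).1 hs).2.le hps hv hx h1 h2 h3⟩
  have key := Finset.card_mul_eq_card_mul (s := (lowNbr T S p).erase v₀)
    (t := (tris A T).filter (S.IsTop p)) R (m := 1) (n := 1) ?_ ?_
  · simpa using key.symm
  · intro v hv
    obtain ⟨hvne, hv⟩ := Finset.mem_erase.1 hv
    have hvn := (Finset.mem_filter.1 hv).1
    have hv₀n := (Finset.mem_filter.1 hv₀).1
    have hfv := (Finset.mem_filter.1 hv).2
    have hfv₀ := (Finset.mem_filter.1 hv₀).2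
    have hvp := ((mem_nbr hT).1 hvn).1
    have hd : 0 < S.det (v - p) (v₀ - p) := by
      rw [← hm v v₀ hv hv₀]
      refine lt_of_le_of_ne (hmin v hv) fun e => hvne ?_
      refine eq_of_det_eq_zero hT S hvn hv₀n hfv hfv₀ (le_antisymm ?_ ?_)
      · rw [← not_lt, ← hm v v₀ hv hv₀]; exact e.not_lt
      · have : S.det (v - p) (v₀ - p) = - S.det (v₀ - p) (v - p) := by
          simp only [Sweep.det]; ring
        rw [this, neg_nonneg, ← not_lt, ← hm v₀ v hv₀ hv]; exact e.not_gt
    have hv₀A : v₀ ∈ A := (Finset.mem_filter.1 hv₀n).1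
    obtain ⟨s, hs, x, α, β, rfl, hxp, hxv, hdec, hβ⟩ :=
      exists_triangle_beside hT S hp hv₀A hvn hd
    have hsF := ((mem_tris hT).1 hs).1
    have hxA : x ∈ A := face_subset hT hsF (by simp)
    have hdx : 0 < S.det (v - p) (x - p) := by
      have : S.det (v - p) (v₀ - p) = β * S.det (v - p) (x - p) := by
        rw [hdec]; simp only [Sweep.det, map_add, map_smul, smul_eq_mul]; ring
      rw [this] at hd
      exact (mul_pos_iff_of_pos_left hβ).1 hd
    have hfvp : S.f (v - p) < 0 := by rw [map_sub]; linarith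
    -- If the third vertex were above `p`, the lower edge `pv₀` would run inside the triangle.
    have hxlow : S.f x < S.f p := by
      by_contra hcon
      have h1 : 0 ≤ S.f (x - p) := by rw [map_sub]; linarith
      have h2 : S.f (v₀ - p) < 0 := by rw [map_sub]; linarith
      rw [hdec] at h2
      simp only [map_add, map_smul, smul_eq_mul] at h2
      have hα : 0 < α := by
        by_contra hα
        have := mul_nonneg hβ.le h1
        have := mul_nonneg_of_nonpos_of_nonpos (not_lt.1 hα) hfvp.le
        linarith
      have c1 := inCone_triple hvp hxp hxv.symm hα hβ
      rw [← hdec] at c1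
      have c2 := inCone_pair ((mem_nbr hT).1 hv₀n).1 one_pos
      rw [one_smul] at c2
      have hE := c1.unique hsF ((mem_nbr hT).1 hv₀n).2 (by simp) (by simp) c2
      have h3 := ((mem_tris hT).1 hs).2
      rw [hE] at h3
      have := Finset.card_le_two (a := p) (b := v₀)
      omega
    rw [Finset.card_eq_one]
    refine ⟨{p, v, x}, ?_⟩
    ext s'
    simp only [Finset.mem_bipartiteAbove, Finset.mem_filter, Finset.mem_singleton]
    constructor
    · rintro ⟨⟨hs', htop⟩, hRs⟩
      obtain ⟨x', hx', -, -, -, hdx', rfl⟩ := hR v s' hs' htop.1 hRs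
      exact triangle_beside_unique hvp ((mem_tris hT).1 hs').1 hsF hdx' hdx
    · rintro rfl
      refine ⟨⟨hs, by simp, ?_⟩, by simp, x, by simp, hdx⟩
      intro y hy
      simp only [Finset.mem_insert, Finset.mem_singleton] at hy
      rcases hy with rfl | rfl | rfl
      · exact le_rfl
      · exact hfv.le
      · exact hxlow.le
  · intro s hs
    obtain ⟨hs, htop⟩ := Finset.mem_filter.1 hs
    obtain ⟨hsF, hcard⟩ := (mem_tris hT).1 hs
    -- Each triangle with top `p` has a right edge at `p`.
    obtain ⟨v, hvR⟩ : ∃ v, R v s := by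
      rcases face_cases hcard.le htop.1 with h | ⟨a, hap, h⟩ | ⟨a, b, hap, hbp, hab, h⟩
      · rw [h] at hcard; simp at hcard
      · rw [h, Finset.card_pair hap.symm] at hcard; omega
      · have ha := mem_lowNbr_of_top hT S hsF htop (v := a) (by simp [h]) hap
        have hb := mem_lowNbr_of_top hT S hsF htop (v := b) (by simp [h]) hbp
        rcases lt_trichotomy (S.det (a - p) (b - p)) 0 with hlt | heq | hgt
        · refine ⟨b, by simp [h], a, by simp [h], ?_⟩
          have : S.det (b - p) (a - p) = - S.det (a - p) (b - p) := by
            simp only [Sweep.det]; ring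
          linarith
        · exact absurd (eq_of_det_eq_zero hT S (Finset.mem_filter.1 ha).1 (Finset.mem_filter.1 hb).1
            (Finset.mem_filter.1 ha).2 (Finset.mem_filter.1 hb).2 heq) hab
        · exact ⟨a, by simp [h], b, by simp [h], hgt⟩
    obtain ⟨x, hx, hvp, hxp, hvx, hd, hse⟩ := hR v s hs htop.1 hvR
    have hvl := mem_lowNbr_of_top hT S hsF htop hvR.1 hvp
    have hxl := mem_lowNbr_of_top hT S hsF htop hx hxp
    rw [Finset.card_eq_one]
    refine ⟨v, ?_⟩
    ext v'
    simp only [Finset.mem_bipartiteBelow, Finset.mem_erase, Finset.mem_singleton]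
    constructor
    · rintro ⟨-, hR'⟩
      obtain ⟨x', hx', hvp', hxp', hvx', hd', hse'⟩ := hR v' s hs htop.1 hR'
      have h1 : v' = v ∨ v' = x := by simpa [hse, hvp'] using hR'.1
      rcases h1 with h1 | h1
      · exact h1
      · exfalso
        have h2 : x' = v := by
          have : x' = v ∨ x' = x := by simpa [hse, hxp'] using hx'
          exact this.resolve_right fun e => hvx' (h1.trans e.symm)
        rw [h1, h2] at hd'
        have : S.det (x - p) (v - p) = - S.det (v - p) (x - p) := by
          simp only [Sweep.det]; ring
        linarith
    · rintro rfl
      refine ⟨⟨?_, hvl⟩, hvR⟩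
      rintro rfl
      have := (hm _ x hvl hxl).2 hd
      exact absurd (hmin x hxl) (not_le.2 this)

/-! ### Triangles crossing the horizontal line through a vertex -/

lemma exists_mid_of_enters (hT : IsTriangulation A T) (S : Sweep A) {p d : Plane} (hp : p ∈ A)
    (hd0 : d ≠ 0) (hfd : S.f d = 0) (hd : Enters A p d) :
    ∃ s ∈ (tris A T).filter (S.IsMid p), InCone p s d := by
  obtain ⟨s, hs, hps, hc⟩ := exists_inCone hT hp hd
  have hsA := face_subset hT hs
  rcases face_cases (hT.1 s hs) hps with rfl | ⟨v, hvp, rfl⟩ | ⟨v, w, hvp, hwp, hvw, rfl⟩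
  · obtain ⟨c, -, rfl⟩ := hc
    simp at hd0
  · obtain ⟨c, hc0, rfl⟩ := hc.pair_iff hvp
    have := S.f_ne hp (hsA (by simp : v ∈ _)) hvp
    rw [map_smul, smul_eq_mul] at hfd
    exact absurd hfd (mul_ne_zero hc0.ne' this)
  · refine ⟨{p, v, w}, Finset.mem_filter.2 ⟨(mem_tris hT).2 ⟨hs, ?_⟩, ?_⟩, hc⟩
    · rw [Finset.card_insert_of_notMem (by simp [hvp.symm, hwp.symm]), Finset.card_pair hvw]
    · obtain ⟨a, b, ha, hb, rfl⟩ := hc.triple_iff hvp hwp hvw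
      have hv := S.f_ne hp (hsA (by simp : v ∈ _)) hvp
      rw [map_add, map_smul, map_smul, smul_eq_mul, smul_eq_mul] at hfd
      rcases lt_or_gt_of_ne hv with h | h
      · have h1 := mul_neg_of_pos_of_neg ha h
        have h2 : 0 < S.f (w - p) := by
          rw [← mul_pos_iff_of_pos_left hb]; linarith
        rw [map_sub] at h h2
        exact ⟨hps, ⟨v, by simp, by linarith⟩, w, by simp, by linarith⟩
      · have h1 := mul_pos ha h
        have h2 : S.f (w - p) < 0 := by
          by_contra hcon
          have := mul_nonneg hb.le (not_lt.1 hcon)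
          linarith
        rw [map_sub] at h h2
        exact ⟨hps, ⟨w, by simp, by linarith⟩, v, by simp, by linarith⟩

lemma inCone_of_mid (hT : IsTriangulation A T) (S : Sweep A) {p : Plane} {s : Finset Plane}
    (hs : s ∈ (tris A T).filter (S.IsMid p)) : InCone p s S.u ∨ InCone p s (-S.u) := by
  obtain ⟨hs, hps, ⟨v, hv, hvlt⟩, w, hw, hwlt⟩ := Finset.mem_filter.1 hs
  obtain ⟨hsF, hcard⟩ := (mem_tris hT).1 hs
  have hvp : v ≠ p := by rintro rfl; exact lt_irrefl _ hvlt
  have hwp : w ≠ p := by rintro rfl; exact lt_irrefl _ hwlt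
  have hvw : v ≠ w := by rintro rfl; linarith
  have hse := card_three_of_mem hcard.le hps hv hw hvp hwp hvw
  -- The positive combination of `v - p` and `w - p` of height zero.
  have hc := inCone_triple hvp hwp hvw (a := S.f (w - p)) (b := -S.f (v - p))
    (by rw [map_sub]; linarith) (by rw [map_sub]; linarith)
  rw [← hse] at hc
  have e := S.eq_smul_u (x := S.f (w - p) • (v - p) + (-S.f (v - p)) • (w - p))
    (by simp only [map_add, map_smul, smul_eq_mul]; ring)
  set k := S.g (S.f (w - p) • (v - p) + (-S.f (v - p)) • (w - p))
  rw [e] at hc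
  rcases lt_trichotomy k 0 with hk | hk | hk
  · right
    have := hc.smul (k := (-k)⁻¹) (inv_pos.2 (by linarith))
    rwa [smul_smul, show (-k)⁻¹ * k = -1 by
      rw [inv_neg, neg_mul, inv_mul_cancel₀ hk.ne], neg_one_smul] at this
  · exfalso
    rw [hk, zero_smul] at hc
    rw [hc.eq_singleton hsF hps] at hcard
    simp at hcard
  · left
    have := hc.smul (k := k⁻¹) (inv_pos.2 hk)
    rwa [smul_smul, inv_mul_cancel₀ hk.ne', one_smul] at this

lemma not_inCone_both (hT : IsTriangulation A T) {p d : Plane} {s : Finset Plane}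
    (hs : s ∈ tris A T) (hp : p ∈ s) (h : InCone p s d) (h' : InCone p s (-d)) : False := by
  obtain ⟨hsF, hcard⟩ := (mem_tris hT).1 hs
  have := h.add h'
  rw [add_neg_cancel] at this
  rw [this.eq_singleton hsF hp] at hcard
  simp at hcard

lemma Sweep.u_ne_zero (S : Sweep A) : S.u ≠ 0 := by
  intro h
  have := S.g_u
  rw [h, map_zero] at this
  exact zero_ne_one this

lemma enters_of_interior {p : Plane} (hp : p ∈ interior (convexHull ℝ (A : Set Plane)))
    (d : Plane) : Enters A p d := by
  have ht : Tendsto (fun t : ℝ => p + t • d) (𝓝[>] 0) (𝓝 p) := by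
    have : Continuous fun t : ℝ => p + t • d := by fun_prop
    have := this.tendsto 0
    simp only [zero_smul, add_zero] at this
    exact this.mono_left nhdsWithin_le_nhds
  have h1 := ht.eventually (mem_interior_iff_mem_nhds.1 hp)
  obtain ⟨t, h, ht⟩ := (h1.and self_mem_nhdsWithin).exists
  exact ⟨t, ht, h⟩

lemma mem_faces_of_mid {S : Sweep A} (hT : IsTriangulation A T) {p : Plane} {s : Finset Plane}
    (hs : s ∈ (tris A T).filter (S.IsMid p)) : s ∈ T.faces ∧ p ∈ s :=
  ⟨((mem_tris hT).1 (Finset.mem_filter.1 hs).1).1, (Finset.mem_filter.1 hs).2.1⟩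

/-- At an interior vertex, both horizontal directions enter `conv A`. -/
lemma card_mid_interior (hT : IsTriangulation A T) (S : Sweep A) {p : Plane} (hp : p ∈ A)
    (hint : p ∈ interior (convexHull ℝ (A : Set Plane))) :
    ((tris A T).filter (S.IsMid p)).card = 2 := by
  obtain ⟨s, hs, hsc⟩ := exists_mid_of_enters hT S hp S.u_ne_zero S.f_u
    (enters_of_interior hint S.u)
  obtain ⟨s', hs', hsc'⟩ := exists_mid_of_enters hT S hp (neg_ne_zero.2 S.u_ne_zero)
    (by rw [map_neg, S.f_u, neg_zero]) (enters_of_interior hint (-S.u))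
  have hf := mem_faces_of_mid hT hs
  have hf' := mem_faces_of_mid hT hs'
  rw [Finset.card_eq_two]
  refine ⟨s, s', ?_, ?_⟩
  · rintro rfl
    exact not_inCone_both hT (Finset.mem_filter.1 hs).1 hf.2 hsc hsc'
  · ext x
    simp only [Finset.mem_insert, Finset.mem_singleton]
    refine ⟨fun hx => ?_, ?_⟩
    · have hfx := mem_faces_of_mid hT hx
      rcases inCone_of_mid hT S hx with h | h
      · exact Or.inl (h.unique hfx.1 hf.1 hfx.2 hf.2 hsc)
      · exact Or.inr (h.unique hfx.1 hf'.1 hfx.2 hf'.2 hsc')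
    · rintro (rfl | rfl) <;> assumption

lemma interior_nonempty (hdim : affineSpan ℝ (A : Set Plane) = ⊤) :
    (interior (convexHull ℝ (A : Set Plane))).Nonempty :=
  interior_convexHull_nonempty_iff_affineSpan_eq_top.2 hdim

/-- The horizontal chord of `conv A` through a vertex that is neither lowest nor highest extends
to at least one side of a boundary vertex: it contains an interior point of `conv A`. -/
lemma enters_of_boundary (hdim : affineSpan ℝ (A : Set Plane) = ⊤) (S : Sweep A) {p q r : Plane}
    (hq : q ∈ A) (hr : r ∈ A) (hqp : S.f q < S.f p) (hpr : S.f p < S.f r)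
    (hbd : p ∉ interior (convexHull ℝ (A : Set Plane))) :
    Enters A p S.u ∨ Enters A p (-S.u) := by
  have hC := convex_convexHull ℝ (A : Set Plane)
  obtain ⟨z, hz⟩ := interior_nonempty hdim
  have cross : ∀ y ∈ A, (S.f y - S.f p) * (S.f z - S.f p) < 0 →
      ∃ x ∈ interior (convexHull ℝ (A : Set Plane)), S.f x = S.f p := by
    intro y hy hlt
    have hne : S.f y - S.f z ≠ 0 := by
      intro h
      have : S.f y - S.f p = S.f z - S.f p := by linarith
      rw [this] at hlt
      exact absurd hlt (not_lt.2 (mul_self_nonneg _))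
    have ha : 0 < (S.f y - S.f p) / (S.f y - S.f z) := by
      rcases mul_neg_iff.1 hlt with ⟨h1, h2⟩ | ⟨h1, h2⟩
      · exact div_pos h1 (by linarith)
      · exact div_pos_of_neg_of_neg h1 (by linarith)
    have hb : 0 < (S.f p - S.f z) / (S.f y - S.f z) := by
      rcases mul_neg_iff.1 hlt with ⟨h1, h2⟩ | ⟨h1, h2⟩
      · exact div_pos (by linarith) (by linarith)
      · exact div_pos_of_neg_of_neg (by linarith) (by linarith)
    refine ⟨_, hC.combo_interior_self_mem_interior hz (subset_convexHull ℝ _ hy) ha hb.le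
      (by field_simp; ring), ?_⟩
    simp only [map_add, map_smul, smul_eq_mul]
    field_simp
    ring
  obtain ⟨x, hx, hfx⟩ : ∃ x ∈ interior (convexHull ℝ (A : Set Plane)), S.f x = S.f p := by
    rcases lt_trichotomy (S.f z) (S.f p) with h | h | h
    · exact cross r hr (mul_neg_of_pos_of_neg (by linarith) (by linarith))
    · exact ⟨z, hz, h⟩
    · exact cross q hq (mul_neg_of_neg_of_pos (by linarith) (by linarith))
  have e := S.eq_smul_u (x := x - p) (by rw [map_sub, hfx, sub_self])
  set k := S.g (x - p)
  have hxC : p + k • S.u ∈ convexHull ℝ (A : Set Plane) := by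
    rw [← e, add_sub_cancel]; exact interior_subset hx
  rcases lt_trichotomy k 0 with hk | hk | hk
  · exact Or.inr ⟨-k, by linarith, by simpa using hxC⟩
  · exfalso
    rw [hk, zero_smul, sub_eq_zero] at e
    exact hbd (e ▸ hx)
  · exact Or.inl ⟨k, hk, hxC⟩

/-- At a boundary vertex that is neither lowest nor highest, the two horizontal directions cannot
both enter `conv A`: a supporting line would be horizontal. -/
lemma not_enters_both (hdim : affineSpan ℝ (A : Set Plane) = ⊤) (S : Sweep A) {p q r : Plane}
    (hq : q ∈ A) (hr : r ∈ A) (hqp : S.f q < S.f p) (hpr : S.f p < S.f r)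
    (hbd : p ∉ interior (convexHull ℝ (A : Set Plane)))
    (h1 : Enters A p S.u) (h2 : Enters A p (-S.u)) : False := by
  have hC := convex_convexHull ℝ (A : Set Plane)
  obtain ⟨h, hh⟩ := geometric_hahn_banach_open_point hC.interior isOpen_interior hbd
  have hle : ∀ x ∈ convexHull ℝ (A : Set Plane), h x ≤ h p := by
    intro x hx
    have hcl : x ∈ closure (interior (convexHull ℝ (A : Set Plane))) := by
      rw [hC.closure_interior_eq_closure_of_nonempty_interior (interior_nonempty hdim)]
      exact subset_closure hx
    exact closure_minimal (fun y hy => (hh y hy).le)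
      (isClosed_le h.continuous continuous_const) hcl
  have hu : h S.u = 0 := by
    obtain ⟨t₁, ht₁, m₁⟩ := h1
    obtain ⟨t₂, ht₂, m₂⟩ := h2
    have e1 := hle _ m₁
    have e2 := hle _ m₂
    simp only [map_add, map_smul, map_neg, smul_eq_mul] at e1 e2
    apply le_antisymm
    · by_contra hcon
      have := mul_pos ht₁ (not_le.1 hcon)
      linarith
    · by_contra hcon
      have := mul_pos ht₂ (neg_pos.2 (not_le.1 hcon))
      linarith
  have prop : ∀ x y, S.f y * h x = S.f x * h y := by
    intro x y
    have := S.eq_smul_u (x := S.f y • x - S.f x • y)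
      (by simp only [map_sub, map_smul, smul_eq_mul]; ring)
    have e := congrArg h this
    rw [map_smul, hu, smul_zero, map_sub, map_smul, map_smul, smul_eq_mul, smul_eq_mul] at e
    linarith
  obtain ⟨z, hz⟩ := interior_nonempty hdim
  have hzp : h (z - p) < 0 := by rw [map_sub]; linarith [hh z hz]
  have hqle : h (q - p) ≤ 0 := by rw [map_sub]; linarith [hle q (subset_convexHull ℝ _ hq)]
  have hrle : h (r - p) ≤ 0 := by rw [map_sub]; linarith [hle r (subset_convexHull ℝ _ hr)]
  have hq' : S.f (q - p) < 0 := by rw [map_sub]; linarith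
  have hr' : 0 < S.f (r - p) := by rw [map_sub]; linarith
  have e1 := prop (q - p) (z - p)
  have e2 := prop (r - p) (z - p)
  have e3 := mul_pos_of_neg_of_neg hq' hzp
  have e4 := mul_neg_of_pos_of_neg hr' hzp
  rcases le_total 0 (S.f (z - p)) with h0 | h0
  · have := mul_nonpos_of_nonneg_of_nonpos h0 hqle
    linarith
  · have := mul_nonneg_of_nonpos_of_nonpos h0 hrle
    linarith

/-- At a boundary vertex that is neither lowest nor highest, exactly one horizontal direction
enters `conv A`. -/
lemma card_mid_boundary (hdim : affineSpan ℝ (A : Set Plane) = ⊤) (hT : IsTriangulation A T)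
    (S : Sweep A) {p q r : Plane} (hp : p ∈ A)
    (hq : q ∈ A) (hr : r ∈ A) (hqp : S.f q < S.f p) (hpr : S.f p < S.f r)
    (hbd : p ∉ interior (convexHull ℝ (A : Set Plane))) :
    ((tris A T).filter (S.IsMid p)).card = 1 := by
  have hnb := not_enters_both hdim S hq hr hqp hpr hbd
  rw [Finset.card_eq_one]
  obtain ⟨d, hd0, hfd, hd, honly⟩ : ∃ d, d ≠ 0 ∧ S.f d = 0 ∧ Enters A p d ∧
      ∀ x ∈ (tris A T).filter (S.IsMid p), InCone p x d := by
    rcases enters_of_boundary hdim S hq hr hqp hpr hbd with h | h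
    · refine ⟨S.u, S.u_ne_zero, S.f_u, h, fun x hx => (inCone_of_mid hT S hx).resolve_right ?_⟩
      intro hc
      have hfx := mem_faces_of_mid hT hx
      exact hnb h (hc.enters hT hfx.1 hfx.2)
    · refine ⟨-S.u, neg_ne_zero.2 S.u_ne_zero, by rw [map_neg, S.f_u, neg_zero], h,
        fun x hx => (inCone_of_mid hT S hx).resolve_left ?_⟩
      intro hc
      have hfx := mem_faces_of_mid hT hx
      exact hnb (hc.enters hT hfx.1 hfx.2) h
  obtain ⟨s, hs, hsc⟩ := exists_mid_of_enters hT S hp hd0 hfd hd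
  have hf := mem_faces_of_mid hT hs
  refine ⟨s, ?_⟩
  ext x
  rw [Finset.mem_singleton]
  refine ⟨fun hx => ?_, fun h => h ▸ hs⟩
  have hfx := mem_faces_of_mid hT hx
  exact (honly x hx).unique hfx.1 hf.1 hfx.2 hf.2 hsc

/-! ### Lower bounds for degrees -/

lemma three_le_degree (hT : IsTriangulation A T) {p : Plane} (hp : p ∈ A)
    (hint : p ∈ interior (convexHull ℝ (A : Set Plane))) : 3 ≤ degree T p := by
  obtain ⟨S⟩ := exists_sweep A
  obtain ⟨s, s', hne, hss⟩ := Finset.card_eq_two.1 (card_mid_interior hT S hp hint)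
  have hs : s ∈ (tris A T).filter (S.IsMid p) := by simp [hss]
  have hs' : s' ∈ (tris A T).filter (S.IsMid p) := by simp [hss]
  have hf := mem_faces_of_mid hT hs
  have hf' := mem_faces_of_mid hT hs'
  have hc := ((mem_tris hT).1 (Finset.mem_filter.1 hs).1).2
  have hc' := ((mem_tris hT).1 (Finset.mem_filter.1 hs').1).2
  -- Two distinct triangles at `p` have at least four vertices together.
  have hsub : s ∪ s' ⊆ insert p (nbr A T p) := by
    intro v hv
    rw [Finset.mem_insert]
    by_cases hvp : v = p
    · exact Or.inl hvp
    · right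
      rw [mem_nbr hT]
      rcases Finset.mem_union.1 hv with hv | hv
      · exact ⟨hvp, edge_of_face hf.1 hf.2 hv⟩
      · exact ⟨hvp, edge_of_face hf'.1 hf'.2 hv⟩
  have h1 := Finset.card_le_card hsub
  have h2 := Finset.card_insert_le p (nbr A T p)
  have h3 : s.card < (s ∪ s').card := by
    apply Finset.card_lt_card
    refine ⟨Finset.subset_union_left, fun h => hne ?_⟩
    exact (Finset.eq_of_subset_of_card_le (Finset.union_subset_right h) (by omega)).symm
  rw [degree_eq_card_nbr hT]
  omega

/-- A vertex with at most one edge would force all points of `A` onto one line. -/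
lemma two_le_degree (hdim : affineSpan ℝ (A : Set Plane) = ⊤) (hT : IsTriangulation A T)
    {p : Plane} (hp : p ∈ A) : 2 ≤ degree T p := by
  obtain ⟨S⟩ := exists_sweep A
  rw [degree_eq_card_nbr hT]
  by_contra hcon
  have hcard : (nbr A T p).card ≤ 1 := by omega
  have claim : ∀ h : Plane →ₗ[ℝ] ℝ, (∀ v ∈ nbr A T p, h (v - p) = 0) → h = 0 := by
    intro h hv
    apply Sweep.linearMap_eq_zero hdim h p
    intro q hq
    obtain ⟨s, hs, hps, hc⟩ := exists_inCone hT hp (d := q - p)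
      ⟨1, one_pos, by simpa using subset_convexHull ℝ _ hq⟩
    obtain ⟨c, -, e⟩ := hc
    rw [e, map_sum]
    refine Finset.sum_eq_zero fun v hvs => ?_
    by_cases hvp : v = p
    · simp [hvp]
    · rw [map_smul, hv v ((mem_nbr hT).2 ⟨hvp, edge_of_face hs hps hvs⟩), smul_zero]
  rcases Nat.le_one_iff_eq_zero_or_eq_one.1 hcard with h | h
  · rw [Finset.card_eq_zero] at h
    have := claim S.g (by simp [h])
    have hu := S.g_u
    rw [this] at hu
    simp at hu
  · obtain ⟨v, hv⟩ := Finset.card_eq_one.1 h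
    have := claim (S.f (v - p) • S.g - S.g (v - p) • S.f) (by
      intro w hw
      rw [hv, Finset.mem_singleton] at hw
      subst hw
      simp only [LinearMap.sub_apply, LinearMap.smul_apply, smul_eq_mul]
      ring)
    have hvn : v ∈ nbr A T p := by simp [hv]
    have hu := LinearMap.congr_fun this S.u
    simp only [LinearMap.sub_apply, LinearMap.smul_apply, smul_eq_mul, S.g_u, S.f_u,
      LinearMap.zero_apply, mul_one, mul_zero, sub_zero] at hu
    exact S.f_ne hp (Finset.mem_filter.1 hvn).1 ((mem_nbr hT).1 hvn).1 hu

/-! ### Global count -/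

lemma Sweep.exists_sorted (hT : IsTriangulation A T) (S : Sweep A) {s : Finset Plane}
    (hs : s ∈ tris A T) :
    ∃ a b c, s = {a, b, c} ∧ S.f a < S.f b ∧ S.f b < S.f c := by
  obtain ⟨hsF, hcard⟩ := (mem_tris hT).1 hs
  have hsA := face_subset hT hsF
  obtain ⟨x, y, z, hxy, hxz, hyz, rfl⟩ := Finset.card_eq_three.1 hcard
  have ne : ∀ v w, v ∈ ({x, y, z} : Finset Plane) → w ∈ ({x, y, z} : Finset Plane) → v ≠ w →
      S.f v ≠ S.f w := fun v w hv hw h e => h (S.inj _ (hsA hv) _ (hsA hw) e)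
  have h1 := ne x y (by simp) (by simp) hxy
  have h2 := ne x z (by simp) (by simp) hxz
  have h3 := ne y z (by simp) (by simp) hyz
  rcases lt_or_gt_of_ne h1 with h1 | h1 <;> rcases lt_or_gt_of_ne h2 with h2 | h2 <;>
    rcases lt_or_gt_of_ne h3 with h3 | h3
  · exact ⟨x, y, z, rfl, h1, h3⟩
  · exact ⟨x, z, y, by grind, h2, h3⟩
  · linarith
  · exact ⟨z, x, y, by grind, h2, h1⟩
  · exact ⟨y, x, z, by grind, h1, h2⟩
  · linarith
  · exact ⟨y, z, x, by grind, h3, h2⟩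
  · exact ⟨z, y, x, by grind, h3, h1⟩

lemma sum_card_top (hT : IsTriangulation A T) (S : Sweep A) :
    ∑ p ∈ A, ((tris A T).filter (S.IsTop p)).card = (tris A T).card := by
  have := Finset.sum_card_bipartiteAbove_eq_sum_card_bipartiteBelow (s := A) (t := tris A T) S.IsTop
  simp only [Finset.bipartiteAbove, Finset.bipartiteBelow] at this
  rw [this, Finset.card_eq_sum_ones]
  refine Finset.sum_congr rfl fun s hs => ?_
  have hsA := face_subset hT ((mem_tris hT).1 hs).1
  obtain ⟨a, b, c, rfl, hab, hbc⟩ := S.exists_sorted hT hs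
  rw [Finset.card_eq_one]
  refine ⟨c, ?_⟩
  ext p
  simp only [Finset.mem_filter, Finset.mem_singleton, Sweep.IsTop, Finset.mem_insert]
  constructor
  · rintro ⟨-, rfl | rfl | rfl, h⟩
    · linarith [h b (by simp)]
    · linarith [h c (by simp)]
    · rfl
  · rintro rfl
    refine ⟨hsA (by simp), by simp, ?_⟩
    rintro v (rfl | rfl | rfl) <;> linarith

lemma sum_card_mid (hT : IsTriangulation A T) (S : Sweep A) :
    ∑ p ∈ A, ((tris A T).filter (S.IsMid p)).card = (tris A T).card := by
  have := Finset.sum_card_bipartiteAbove_eq_sum_card_bipartiteBelow (s := A) (t := tris A T) S.IsMid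
  simp only [Finset.bipartiteAbove, Finset.bipartiteBelow] at this
  rw [this, Finset.card_eq_sum_ones]
  refine Finset.sum_congr rfl fun s hs => ?_
  have hsA := face_subset hT ((mem_tris hT).1 hs).1
  obtain ⟨a, b, c, rfl, hab, hbc⟩ := S.exists_sorted hT hs
  rw [Finset.card_eq_one]
  refine ⟨b, ?_⟩
  ext p
  simp only [Finset.mem_filter, Finset.mem_singleton, Sweep.IsMid, Finset.mem_insert]
  constructor
  · rintro ⟨-, rfl | rfl | rfl, ⟨v, hv, hv'⟩, w, hw, hw'⟩
    · exfalso
      rcases hv with rfl | rfl | rfl <;> linarith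
    · rfl
    · exfalso
      rcases hw with rfl | rfl | rfl <;> linarith
  · rintro rfl
    exact ⟨hsA (by simp), by simp, ⟨a, by simp, hab⟩, c, by simp, hbc⟩

/-- Each edge is counted once at each endpoint, hence twice as often as at its upper endpoint. -/
lemma sum_degree (hT : IsTriangulation A T) (S : Sweep A) :
    ∑ p ∈ A, degree T p = 2 * ∑ p ∈ A, (lowNbr T S p).card := by
  have hsplit : ∀ p ∈ A, degree T p = (lowNbr T S p).card +
      ((nbr A T p).filter fun v => S.f p < S.f v).card := by
    intro p hp
    rw [degree_eq_card_nbr hT,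
      ← Finset.card_filter_add_card_filter_not (s := nbr A T p) (fun v => S.f v < S.f p)]
    congr 2
    apply Finset.filter_congr
    intro v hv
    have hne : S.f v ≠ S.f p := fun e => ((mem_nbr hT).1 hv).1
      (S.inj _ (Finset.mem_filter.1 hv).1 _ hp e)
    rw [not_lt]
    exact ⟨fun h => lt_of_le_of_ne h hne.symm, le_of_lt⟩
  have hswap := Finset.sum_card_bipartiteAbove_eq_sum_card_bipartiteBelow (s := A) (t := A)
    (fun p v => (v ≠ p ∧ {p, v} ∈ T.faces) ∧ S.f v < S.f p)
  simp only [Finset.bipartiteAbove, Finset.bipartiteBelow] at hswap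
  rw [Finset.sum_congr rfl hsplit, Finset.sum_add_distrib, two_mul]
  congr 1
  simp only [lowNbr, nbr, Finset.filter_filter]
  rw [hswap]
  refine Finset.sum_congr rfl fun p _ => ?_
  congr 1
  apply Finset.filter_congr
  intro v _
  rw [Finset.pair_comm, ne_comm]

/-- The height is not constant on `A`. -/
lemma exists_lt (hdim : affineSpan ℝ (A : Set Plane) = ⊤) (S : Sweep A) {p : Plane} (hp : p ∈ A) :
    ∃ q ∈ A, S.f q ≠ S.f p := by
  by_contra! hcon
  have hA : ∀ q ∈ A, q = p := fun q hq => S.inj _ hq _ hp (hcon q hq)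
  have := Sweep.linearMap_eq_zero hdim S.g p fun q hq => by rw [hA q hq, sub_self, map_zero]
  have hu := S.g_u
  rw [this] at hu
  simp at hu

/-- The degree sum, written as a count of interior and boundary vertices. -/
lemma sum_degree_add_six (hdim : affineSpan ℝ (A : Set Plane) = ⊤) (hT : IsTriangulation A T) :
    ∑ p ∈ A, degree T p + 6 =
      ∑ p ∈ A, if p ∈ interior (convexHull ℝ (A : Set Plane)) then 6 else 4 := by
  obtain ⟨S⟩ := exists_sweep A
  have hne : A.Nonempty := by
    rw [← Finset.coe_nonempty, ← affineSpan_nonempty ℝ, hdim]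
    exact ⟨0, AffineSubspace.mem_top ℝ Plane 0⟩
  obtain ⟨a, ha, hmin⟩ := A.exists_min_image S.f hne
  obtain ⟨b, hb, hmax⟩ := A.exists_max_image S.f hne
  have hab : a ≠ b := by
    rintro rfl
    obtain ⟨q, hq, hqa⟩ := exists_lt hdim S ha
    exact hqa (le_antisymm (hmax q hq) (hmin q hq))
  have hlow : ∀ p ∈ A, ((tris A T).filter (S.IsTop p)).card + 1 =
      (lowNbr T S p).card + if p = a then 1 else 0 := by
    intro p hp
    split_ifs with h
    · subst h
      have h1 : lowNbr T S p = ∅ := by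
        refine Finset.filter_eq_empty_iff.2 fun v hv => ?_
        rw [not_lt]
        exact hmin v (Finset.mem_filter.1 hv).1
      have h2 : (tris A T).filter (S.IsTop p) = ∅ := by
        refine Finset.filter_eq_empty_iff.2 fun s hs htop => ?_
        obtain ⟨hsF, hcard⟩ := (mem_tris hT).1 hs
        obtain ⟨v, hv, hvp⟩ := Finset.exists_mem_ne (by omega : 1 < s.card) p
        have := mem_lowNbr_of_top hT S hsF htop hv hvp
        rw [h1] at this
        simp at this
      rw [h1, h2, Finset.card_empty, Finset.card_empty]
    · rw [add_zero]
      exact card_top_add_one hT S hp ha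
        (lt_of_le_of_ne (hmin p hp) fun e => h (S.inj _ hp _ ha e.symm))
  have hmid : ∀ p ∈ A, ((tris A T).filter (S.IsMid p)).card + (if p = a then 1 else 0) +
      (if p = b then 1 else 0) =
      if p ∈ interior (convexHull ℝ (A : Set Plane)) then 2 else 1 := by
    intro p hp
    have hext : p = a ∨ p = b → ((tris A T).filter (S.IsMid p)).card = 0 := by
      intro h
      rw [Finset.card_eq_zero]
      refine Finset.filter_eq_empty_iff.2 fun s hs hm => ?_
      have hsA := face_subset hT ((mem_tris hT).1 hs).1
      obtain ⟨-, ⟨v, hv, hv'⟩, w, hw, hw'⟩ := hm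
      rcases h with rfl | rfl
      · linarith [hmin v (hsA hv)]
      · linarith [hmax w (hsA hw)]
    by_cases hint : p ∈ interior (convexHull ℝ (A : Set Plane))
    · have h2 := card_mid_interior hT S hp hint
      have hpa : p ≠ a := fun h => by have := hext (Or.inl h); omega
      have hpb : p ≠ b := fun h => by have := hext (Or.inr h); omega
      simp [hint, hpa, hpb, h2]
    · by_cases hpa : p = a
      · have hpb : p ≠ b := fun h => hab (hpa.symm.trans h)
        rw [if_pos hpa, if_neg hpb, if_neg hint, hext (Or.inl hpa)]
      · by_cases hpb : p = b
        · rw [if_neg hpa, if_pos hpb, if_neg hint, hext (Or.inr hpb)]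
        · rw [if_neg hpa, if_neg hpb, if_neg hint]
          exact card_mid_boundary hdim hT S hp ha hb
            (lt_of_le_of_ne (hmin p hp) fun e => hpa (S.inj _ hp _ ha e.symm))
            (lt_of_le_of_ne (hmax p hp) fun e => hpb (S.inj _ hp _ hb e)) hint
  have e1 := Finset.sum_congr rfl hlow
  have e2 := Finset.sum_congr rfl hmid
  simp only [Finset.sum_add_distrib, sum_card_top hT, sum_card_mid hT, Finset.sum_ite_eq', ha, hb,
    if_true] at e1 e2
  have e3 := sum_degree hT S
  -- The right-hand sum is `2 ∑ (2 or 1) + 2 |A|`.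
  have e4 : (∑ p ∈ A, if p ∈ interior (convexHull ℝ (A : Set Plane)) then 6 else 4) =
      2 * (∑ p ∈ A, if p ∈ interior (convexHull ℝ (A : Set Plane)) then 2 else 1)
        + 2 * ∑ p ∈ A, 1 := by
    rw [Finset.mul_sum, Finset.mul_sum, ← Finset.sum_add_distrib]
    refine Finset.sum_congr rfl fun p _ => ?_
    split_ifs <;> rfl
  omega

/-- Grouping a finite set of vertices by degree. -/
lemma finsum_degree (B : Finset Plane) (δ : Plane → ℕ) (k : ℤ) (m : ℕ) (hm : ∀ p ∈ B, m ≤ δ p) :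
    ∑ᶠ i ∈ Set.Ici m, (k - (i : ℤ)) * (Set.ncard {p | p ∈ B ∧ δ p = i} : ℤ) =
      ∑ p ∈ B, (k - (δ p : ℤ)) := by
  have hcard : ∀ i, Set.ncard {p | p ∈ B ∧ δ p = i} = (B.filter fun p => δ p = i).card := by
    intro i
    rw [← Set.ncard_coe_finset]
    congr 1
    ext p
    simp
  simp only [hcard]
  rw [finsum_mem_eq_sum_of_inter_support_eq (t := B.image δ)]
  · rw [← Finset.sum_fiberwise_of_maps_to (g := δ) (t := B.image δ)
      fun p hp => Finset.mem_image_of_mem _ hp]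
    refine Finset.sum_congr rfl fun i _ => ?_
    rw [Finset.sum_congr rfl (g := fun _ => k - (i : ℤ))
      fun p hp => by rw [(Finset.mem_filter.1 hp).2]]
    rw [Finset.sum_const, nsmul_eq_mul, mul_comm]
  · ext i
    simp only [Set.mem_inter_iff, Set.mem_Ici, Finset.coe_image, Set.mem_image, Finset.mem_coe,
      and_congr_left_iff, Function.mem_support]
    intro hi
    have hpos : (B.filter fun p => δ p = i).Nonempty := by
      rw [Finset.nonempty_iff_ne_empty]
      intro h
      simp [h] at hi
    obtain ⟨p, hp⟩ := hpos
    obtain ⟨hpB, rfl⟩ := Finset.mem_filter.1 hp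
    exact ⟨fun _ => ⟨p, hpB, rfl⟩, fun _ => hm p hpB⟩

end Euler

theorem euler_relation_for_triangulations
    (A : Finset Plane)
    (hdim : affineSpan ℝ (A : Set Plane) = ⊤)
    (T : SimplicialComplex ℝ Plane)
    (hT : IsTriangulation A T)
    (vdeg bdeg : ℕ → ℕ)
    (hvdeg : ∀ i, vdeg i = Set.ncard {p : Plane | p ∈ A ∧
      p ∈ interior (convexHull ℝ (A : Set Plane)) ∧ degree T p = i})
    (hbdeg : ∀ j, bdeg j = Set.ncard {p : Plane | p ∈ A ∧
      p ∈ frontier (convexHull ℝ (A : Set Plane)) ∧ degree T p = j}) :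
    (∑ᶠ i ∈ Set.Ici (3 : ℕ), (6 - (i : ℤ)) * (vdeg i : ℤ)) +
      (∑ᶠ j ∈ Set.Ici (2 : ℕ), (4 - (j : ℤ)) * (bdeg j : ℤ)) = 6 := by
  classical
  have hcl : IsClosed (convexHull ℝ (A : Set Plane)) :=
    (Finset.finite_toSet A).isClosed_convexHull ℝ
  have hfr : ∀ p ∈ A, p ∈ frontier (convexHull ℝ (A : Set Plane)) ↔
      p ∉ interior (convexHull ℝ (A : Set Plane)) := by
    intro p hp
    rw [hcl.frontier_eq, Set.mem_sdiff]
    exact and_iff_right (subset_convexHull ℝ _ hp)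
  -- The degree bounds ensure that the index ranges `i ≥ 3` and `j ≥ 2` miss no vertex.
  have e1 := finsum_degree (A.filter fun p => p ∈ interior (convexHull ℝ (A : Set Plane)))
    (degree T) 6 3 fun p hp => three_le_degree hT (Finset.mem_filter.1 hp).1
      (Finset.mem_filter.1 hp).2
  have e2 := finsum_degree (A.filter fun p => ¬ p ∈ interior (convexHull ℝ (A : Set Plane)))
    (degree T) 4 2 fun p hp => two_le_degree hdim hT (Finset.mem_filter.1 hp).1
  have hv : ∀ i, vdeg i = Set.ncard {p : Plane | p ∈ A.filter (fun p =>
      p ∈ interior (convexHull ℝ (A : Set Plane))) ∧ degree T p = i} := by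
    intro i
    rw [hvdeg]
    simp only [Finset.mem_filter, and_assoc]
  have hb : ∀ j, bdeg j = Set.ncard {p : Plane | p ∈ A.filter (fun p =>
      ¬ p ∈ interior (convexHull ℝ (A : Set Plane))) ∧ degree T p = j} := by
    intro j
    rw [hbdeg]
    congr 1
    ext p
    simp only [Set.mem_ofPred_eq, Finset.mem_filter, and_assoc]
    exact and_congr_right fun hp => by rw [hfr p hp]
  simp only [hv, hb]
  rw [e1, e2, Finset.sum_filter, Finset.sum_filter, ← Finset.sum_add_distrib]
  have key := congrArg (Nat.cast : ℕ → ℤ) (sum_degree_add_six hdim hT)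
  push_cast at key
  have : ∀ p ∈ A, ((if p ∈ interior (convexHull ℝ (A : Set Plane)) then 6 - (degree T p : ℤ)
      else 0) + if ¬ p ∈ interior (convexHull ℝ (A : Set Plane)) then 4 - (degree T p : ℤ) else 0)
      = (if p ∈ interior (convexHull ℝ (A : Set Plane)) then (6 : ℤ) else 4) - degree T p := by
    intro p _
    by_cases h : p ∈ interior (convexHull ℝ (A : Set Plane)) <;> simp [h]
  rw [Finset.sum_congr rfl this, Finset.sum_sub_distrib]
  have e : (∑ p ∈ A, if p ∈ interior (convexHull ℝ (A : Set Plane)) then (6 : ℤ) else 4) =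
      ∑ p ∈ A, (degree T p : ℤ) + 6 := by
    rw [key]
  rw [e]
  ring
end

section
/- Let T be a triangulation of a finite point set A ⊂ ℝ² whose convex hull is two-dimensional. Let v and b be the numbers of interior and boundary vertices of T respectively, let e be the number of edges of T (faces with exactly 2 elements) and t the number of triangles of T (faces with exactly 3 elements). Then 3·t = 2·e − b and 6·v + 4·b = 6 + 2·e. -/
/-!
The proof is a sweep with a linear height `h` that takes distinct values on `A`; write `n = v + b`.

* A triangle has a unique vertex of middle height. The horizontal line through that vertex `p` enters
  the triangle, and by genericity no edge is horizontal, so triangles with middle vertex `p`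
  correspond to the horizontal directions at `p` that point into `conv A`. There are two of them at an
  interior point, one at a boundary point that is neither lowest nor highest, and none at these two.
  Hence `t = v + (n - 2)` (`card_tri_eq`).
* Sort the downward edges at a vertex `p` by slope. Triangles with top vertex `p` are exactly the pairs
  of consecutive downward edges (`consecutive`, `not_between`), so there is one fewer of them than of
  downward edges, unless `p` is the lowest vertex, which has neither. Hence `e = t + (n - 1)`
  (`card_edge_eq`).

The two equations give both identities. The geometric input is that the open cones at `p` of the
edges and triangles through `p` are pairwise disjoint (`ray_ray`, `ray_tri`, `tri_tri`) and contain
every nonzero direction pointing into `conv A` (`exists_cone`).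
-/

open Geometry

namespace TriCount

open Finset

/-! ### The fan of a triangulation at a vertex -/

/-- The relatively open simplex spanned by `s`: convex combinations with all weights positive. -/
def openHull (s : Finset Plane) : Set Plane :=
  {x | ∃ w : Plane → ℝ, (∀ i ∈ s, 0 < w i) ∧ ∑ i ∈ s, w i = 1 ∧ ∑ i ∈ s, w i • i = x}

lemma openHull_subset (s : Finset Plane) : openHull s ⊆ convexHull ℝ (s : Set Plane) := by
  rintro x ⟨w, h0, h1, rfl⟩
  exact Finset.mem_convexHull'.2 ⟨w, fun i hi => (h0 i hi).le, h1, rfl⟩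

lemma subset_of_openHull {T : SimplicialComplex ℝ Plane} {s t : Finset Plane}
    (hs : s ∈ T.faces) (ht : t ∈ T.faces) {x : Plane} (hx : x ∈ openHull s)
    (hxt : x ∈ openHull t) : s ⊆ t := by
  classical
  have hmem := T.inter_subset_convexHull hs ht ⟨openHull_subset s hx, openHull_subset t hxt⟩
  rw [← Finset.coe_inter] at hmem
  obtain ⟨w', -, h1', h2'⟩ := Finset.mem_convexHull'.1 hmem
  obtain ⟨w, h0, h1, h2⟩ := hx
  intro i hi
  by_contra hit
  have hind := affineIndependent_iff.1 (T.indep hs) Finset.univ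
    (fun j => w j - if (j : Plane) ∈ s ∩ t then w' j else 0)
  have e1 : ∑ j ∈ s, (if j ∈ s ∩ t then w' j else 0) = 1 := by
    rw [← h1', ← Finset.sum_filter]
    congr 1
    ext j; simp +contextual
  have e2 : ∑ j ∈ s, (if j ∈ s ∩ t then w' j else 0) • j = x := by
    rw [← h2']
    simp only [ite_smul, zero_smul]
    rw [← Finset.sum_filter]
    congr 1
    ext j; simp +contextual
  have a1 : ∑ j : s, (w j - if (j : Plane) ∈ s ∩ t then w' j else 0) = 0 := by
    rw [Finset.sum_coe_sort s (fun j => w j - if j ∈ s ∩ t then w' j else 0),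
      Finset.sum_sub_distrib, h1, e1, sub_self]
  have a2 : ∑ j : s, (w j - if (j : Plane) ∈ s ∩ t then w' j else 0) • (j : Plane) = 0 := by
    rw [Finset.sum_coe_sort s (fun j => (w j - if j ∈ s ∩ t then w' j else 0) • j)]
    simp only [sub_smul]
    rw [Finset.sum_sub_distrib, h2, e2, sub_self]
  have := hind a1 a2 ⟨i, hi⟩ (Finset.mem_univ _)
  simp [hit] at this
  exact (h0 i hi).ne' this

/-- The relatively open simplices of a simplicial complex are pairwise disjoint. -/
lemma eq_of_openHull {T : SimplicialComplex ℝ Plane} {s t : Finset Plane}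
    (hs : s ∈ T.faces) (ht : t ∈ T.faces) {x : Plane} (hx : x ∈ openHull s)
    (hxt : x ∈ openHull t) : s = t :=
  (subset_of_openHull hs ht hx hxt).antisymm (subset_of_openHull ht hs hxt hx)

lemma mem_openHull_pair {p q : Plane} (hq : q ≠ p) {a : ℝ} (ha : 0 < a) (ha1 : a < 1) :
    p + a • (q - p) ∈ openHull {p, q} := by
  classical
  refine ⟨fun x => if x = q then a else 1 - a, ?_, ?_, ?_⟩
  · intro i hi
    dsimp only
    split_ifs <;> linarith
  · rw [Finset.sum_pair hq.symm]
    simp [hq.symm]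
  · rw [Finset.sum_pair hq.symm]
    simp only [hq.symm, if_true, if_false]
    module

lemma mem_openHull_triple {p q r : Plane} (hq : q ≠ p) (hr : r ≠ p) (hqr : q ≠ r) {a b : ℝ}
    (ha : 0 < a) (hb : 0 < b) (hab : a + b < 1) :
    p + (a • (q - p) + b • (r - p)) ∈ openHull {p, q, r} := by
  classical
  have hp : p ∉ ({q, r} : Finset Plane) := by simp [hq.symm, hr.symm]
  refine ⟨fun x => if x = q then a else if x = r then b else 1 - a - b, ?_, ?_, ?_⟩
  · intro i hi
    dsimp only
    split_ifs <;> linarith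
  · rw [Finset.sum_insert hp, Finset.sum_pair hqr]
    simp [hq.symm, hr.symm, hqr.symm]
  · rw [Finset.sum_insert hp, Finset.sum_pair hqr]
    simp only [hq.symm, hr.symm, hqr.symm, if_true, if_false]
    module

lemma ray_ray {T : SimplicialComplex ℝ Plane} {p q q' : Plane} (hq : q ≠ p) (hq' : q' ≠ p)
    (hs : {p, q} ∈ T.faces) (hs' : {p, q'} ∈ T.faces) {c : ℝ} (hc : 0 < c)
    (h : q - p = c • (q' - p)) : q = q' := by
  have h1 := mem_openHull_pair hq (a := 1 / (2 * (1 + c))) (by positivity)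
    (by rw [div_lt_one (by positivity)]; linarith)
  have h2 := mem_openHull_pair hq' (a := c / (2 * (1 + c))) (by positivity)
    (by rw [div_lt_one (by positivity)]; linarith)
  have e : p + (1 / (2 * (1 + c))) • (q - p) = p + (c / (2 * (1 + c))) • (q' - p) := by
    rw [h, smul_smul]; congr 2; ring
  rw [e] at h1
  have := eq_of_openHull hs hs' h1 h2
  have hm : q ∈ ({p, q'} : Finset Plane) := this ▸ (by simp)
  simpa [hq] using hm

lemma ray_tri {T : SimplicialComplex ℝ Plane} {p q r x : Plane} (hq : q ≠ p) (hr : r ≠ p)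
    (hqr : q ≠ r) (hx : x ≠ p) (hs : {p, q, r} ∈ T.faces) (hs' : {p, x} ∈ T.faces)
    {a b : ℝ} (ha : 0 < a) (hb : 0 < b) (h : x - p = a • (q - p) + b • (r - p)) : False := by
  have hpos : 0 < 2 * (1 + a + b) := by positivity
  have h1 := mem_openHull_pair hx (a := 1 / (2 * (1 + a + b))) (by positivity)
    (by rw [div_lt_one (by positivity)]; linarith)
  have h2 := mem_openHull_triple hq hr hqr (a := a / (2 * (1 + a + b)))
    (b := b / (2 * (1 + a + b))) (by positivity) (by positivity)
    (by rw [← add_div, div_lt_one (by positivity)]; linarith)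
  have e : p + (1 / (2 * (1 + a + b))) • (x - p) = p + ((a / (2 * (1 + a + b))) • (q - p)
      + (b / (2 * (1 + a + b))) • (r - p)) := by
    rw [h, smul_add, smul_smul, smul_smul]; congr 3 <;> ring
  rw [e] at h1
  have := congrArg Finset.card (eq_of_openHull hs' hs h1 h2)
  rw [Finset.card_pair hx.symm, Finset.card_eq_three.2 ⟨p, q, r, hq.symm, hr.symm, hqr, rfl⟩] at this
  omega

lemma tri_tri {T : SimplicialComplex ℝ Plane} {p q r q' r' : Plane} (hq : q ≠ p) (hr : r ≠ p)
    (hqr : q ≠ r) (hq' : q' ≠ p) (hr' : r' ≠ p) (hqr' : q' ≠ r')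
    (hs : {p, q, r} ∈ T.faces) (hs' : {p, q', r'} ∈ T.faces)
    {a b a' b' : ℝ} (ha : 0 < a) (hb : 0 < b) (ha' : 0 < a') (hb' : 0 < b')
    (h : a • (q - p) + b • (r - p) = a' • (q' - p) + b' • (r' - p)) :
    ({p, q, r} : Finset Plane) = {p, q', r'} := by
  obtain ⟨M, hM⟩ : ∃ M, M = 1 + a + b + a' + b' := ⟨_, rfl⟩
  have hpos : 0 < M := by rw [hM]; positivity
  have h1 := mem_openHull_triple hq hr hqr (a := M⁻¹ * a) (b := M⁻¹ * b)
    (by positivity) (by positivity)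
    (by rw [← mul_add, inv_mul_lt_one₀ hpos]; linarith)
  have h2 := mem_openHull_triple hq' hr' hqr' (a := M⁻¹ * a') (b := M⁻¹ * b')
    (by positivity) (by positivity)
    (by rw [← mul_add, inv_mul_lt_one₀ hpos]; linarith)
  rw [mul_smul, mul_smul, ← smul_add, h, smul_add, ← mul_smul, ← mul_smul] at h1
  exact eq_of_openHull hs hs' h1 h2

lemma faces_subset {A : Finset Plane} {T : SimplicialComplex ℝ Plane} (hT : IsTriangulation A T)
    {s : Finset Plane} (hs : s ∈ T.faces) : s ⊆ A := by
  intro x hx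
  have : x ∈ T.vertices :=
    T.down_closed hs (Finset.singleton_subset_iff.2 hx) (Finset.singleton_nonempty _)
  rw [hT.2.2] at this
  exact this

lemma faces_finite {A : Finset Plane} {T : SimplicialComplex ℝ Plane} (hT : IsTriangulation A T) :
    T.faces.Finite :=
  (A.powerset.finite_toSet).subset fun s hs => by simpa using faces_subset hT hs

/-- Near `p`, the hull is covered by the faces containing `p`, since the others form a closed set. -/
lemma exists_face {A : Finset Plane} {T : SimplicialComplex ℝ Plane} (hT : IsTriangulation A T)
    {p w : Plane} (hp : p ∈ A) {δ : ℝ} (hδ : 0 < δ)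
    (hw : p + δ • w ∈ convexHull ℝ (A : Set Plane)) :
    ∃ s ∈ T.faces, p ∈ s ∧ ∃ ε : ℝ, 0 < ε ∧ p + ε • w ∈ convexHull ℝ (s : Set Plane) := by
  have hpv : p ∈ T.vertices := by rw [hT.2.2]; exact hp
  set F := {s | s ∈ T.faces ∧ p ∉ s} with hF
  have hFfin : F.Finite := (faces_finite hT).subset fun s hs => hs.1
  have hclosed : IsClosed (⋃ s ∈ F, convexHull ℝ (s : Set Plane)) :=
    hFfin.isClosed_biUnion fun s _ => (s.finite_toSet.isCompact_convexHull ℝ).isClosed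
  have hpn : p ∉ ⋃ s ∈ F, convexHull ℝ (s : Set Plane) := by
    simp only [Set.mem_iUnion, not_exists]
    intro s hs hps
    exact hs.2 ((SimplicialComplex.vertex_mem_convexHull_iff hpv hs.1).1 hps)
  have hcont : Continuous fun ε : ℝ => p + ε • w := by fun_prop
  have hev : ∀ᶠ ε in nhds (0 : ℝ), p + ε • w ∈ (⋃ s ∈ F, convexHull ℝ (s : Set Plane))ᶜ := by
    apply hcont.continuousAt.eventually_mem
    apply hclosed.isOpen_compl.mem_nhds
    simpa using hpn
  obtain ⟨η, hη, hball⟩ := Metric.eventually_nhds_iff.1 hev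
  set ε := min (η / 2) δ with hε
  have hε0 : 0 < ε := lt_min (by linarith) hδ
  have hn := @hball ε (by
    rw [Real.dist_eq, sub_zero, abs_of_pos hε0]
    exact (min_le_left _ _).trans_lt (by linarith))
  have hPp : p ∈ convexHull ℝ (A : Set Plane) := subset_convexHull ℝ _ hp
  have hin : p + ε • w ∈ T.space := by
    rw [hT.2.1]
    have := (convex_convexHull ℝ (A : Set Plane)).add_smul_mem hPp hw (t := ε / δ)
      ⟨by positivity, by rw [div_le_one hδ]; exact min_le_right _ _⟩
    rwa [smul_smul, div_mul_cancel₀ _ hδ.ne'] at this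
  obtain ⟨s, hs, hxs⟩ := SimplicialComplex.mem_space_iff.1 hin
  refine ⟨s, hs, ?_, ε, hε0, hxs⟩
  by_contra hps
  apply hn
  simp only [Set.mem_iUnion]
  exact ⟨s, ⟨hs, hps⟩, hxs⟩

/-- Every nonzero direction `w` pointing from the vertex `p` into the hull lies on the ray of an
edge at `p` or in the open cone of a triangle at `p`. -/
lemma exists_cone {A : Finset Plane} {T : SimplicialComplex ℝ Plane} (hT : IsTriangulation A T)
    {p w : Plane} (hp : p ∈ A) (hw0 : w ≠ 0) {δ : ℝ} (hδ : 0 < δ)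
    (hw : p + δ • w ∈ convexHull ℝ (A : Set Plane)) :
    (∃ (q : Plane) (c : ℝ), 0 < c ∧ q ≠ p ∧ {p, q} ∈ T.faces ∧ w = c • (q - p)) ∨
    (∃ (q r : Plane) (c d : ℝ), 0 < c ∧ 0 < d ∧ q ≠ p ∧ r ≠ p ∧ q ≠ r ∧ {p, q, r} ∈ T.faces ∧
      w = c • (q - p) + d • (r - p)) := by
  classical
  obtain ⟨s, hs, hps, ε, hε, hx⟩ := exists_face hT hp hδ hw
  obtain ⟨f, f0, f1, f2⟩ := Finset.mem_convexHull'.1 hx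
  have hcard := hT.1 s hs
  have hce := Finset.card_erase_of_mem hps
  have hins := Finset.insert_erase hps
  have hpe : p ∉ s.erase p := by simp
  have hsolve : ∀ x : Plane, ε • w = x → w = ε⁻¹ • x := by
    rintro x rfl
    rw [smul_smul, inv_mul_cancel₀ hε.ne', one_smul]
  have hray : ∀ (q : Plane) (c : ℝ), q ≠ p → {p, q} ∈ T.faces → 0 ≤ c → w = c • (q - p) →
      ∃ (q : Plane) (c : ℝ), 0 < c ∧ q ≠ p ∧ {p, q} ∈ T.faces ∧ w = c • (q - p) := by
    intro q c hq hf hc hwc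
    rcases hc.eq_or_lt with rfl | hc
    · exact absurd (by simpa using hwc) hw0
    · exact ⟨q, c, hc, hq, hf, hwc⟩
  obtain h0 | h1 | h2 : (s.erase p).card = 0 ∨ (s.erase p).card = 1 ∨ (s.erase p).card = 2 := by
    omega
  · rw [Finset.card_eq_zero] at h0
    rw [h0] at hins
    rw [← hins] at f1 f2
    simp at f1 f2
    rw [f1] at f2
    simp at f2
    exact absurd f2 (by simp [hε.ne', hw0])
  · obtain ⟨q, hq⟩ := Finset.card_eq_one.1 h1
    rw [hq] at hins hpe
    have hqp : q ≠ p := by rintro rfl; simp at hpe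
    rw [← hins, Finset.sum_insert hpe, Finset.sum_singleton] at f1 f2
    left
    refine hray q (ε⁻¹ * f q) hqp (hins ▸ hs)
      (mul_nonneg (by positivity) (f0 q (by rw [← hins]; simp))) ?_
    rw [mul_smul]
    apply hsolve
    have : f p = 1 - f q := by linarith
    rw [this] at f2
    rw [← add_right_inj p, ← f2]
    module
  · obtain ⟨q, r, hqr, hq⟩ := Finset.card_eq_two.1 h2
    rw [hq] at hins hpe
    have hqp : q ≠ p := by rintro rfl; simp at hpe
    have hrp : r ≠ p := by rintro rfl; simp at hpe
    rw [← hins, Finset.sum_insert hpe, Finset.sum_pair hqr] at f1 f2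
    have hfq : 0 ≤ f q := f0 q (by rw [← hins]; simp)
    have hfr : 0 ≤ f r := f0 r (by rw [← hins]; simp)
    have hweq : w = (ε⁻¹ * f q) • (q - p) + (ε⁻¹ * f r) • (r - p) := by
      rw [mul_smul, mul_smul, ← smul_add]
      apply hsolve
      have : f p = 1 - f q - f r := by linarith
      rw [this] at f2
      rw [← add_right_inj p, ← f2]
      module
    have hs' : {p, q, r} ∈ T.faces := hins ▸ hs
    rcases hfq.eq_or_lt with h | hfq
    · left
      refine hray r (ε⁻¹ * f r) hrp (T.down_closed hs' (by grind) (by simp)) (by positivity) ?_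
      rw [hweq, ← h]; simp
    rcases hfr.eq_or_lt with h | hfr
    · left
      refine hray q (ε⁻¹ * f q) hqp (T.down_closed hs' (by grind) (by simp)) (by positivity) ?_
      rw [hweq, ← h]; simp
    right
    exact ⟨q, r, _, _, by positivity, by positivity, hqp, hrp, hqr, hs', hweq⟩

/-! ### Generic coordinates -/

/-- Linear coordinates `(h, k)` on the plane whose height `h` separates the points of `A`;
`u` is the horizontal vector with `k u = 1`. Existence of a vector of height `1` excludes `h = 0`. -/
structure Coord (A : Finset Plane) (h k : Plane →ₗ[ℝ] ℝ) (u : Plane) : Prop where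
  inj : ∀ x, h x = 0 → k x = 0 → x = 0
  hu : h u = 0
  ku : k u = 1
  hd : ∃ d, h d = 1
  gen : ∀ p ∈ A, ∀ q ∈ A, h p = h q → p = q

/-- The oriented area form of the coordinates `(h, k)`. -/
def D (h k : Plane →ₗ[ℝ] ℝ) (x y : Plane) : ℝ := h y * k x - h x * k y

section
variable {A : Finset Plane} {T : SimplicialComplex ℝ Plane} {h k : Plane →ₗ[ℝ] ℝ} {u : Plane}

lemma Coord.ext (C : Coord A h k u) {x y : Plane} (h1 : h x = h y) (h2 : k x = k y) : x = y :=
  sub_eq_zero.1 (C.inj _ (by simp [h1]) (by simp [h2]))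

/-- Cramer's rule. -/
lemma Coord.expand (C : Coord A h k u) {x a b : Plane} (hD : D h k a b ≠ 0) :
    x = (D h k x b / D h k a b) • a + (D h k a x / D h k a b) • b := by
  apply C.ext
  · simp only [map_add, map_smul, smul_eq_mul]
    rw [div_mul_eq_mul_div, div_mul_eq_mul_div, ← add_div, eq_div_iff hD]
    unfold D; ring
  · simp only [map_add, map_smul, smul_eq_mul]
    rw [div_mul_eq_mul_div, div_mul_eq_mul_div, ← add_div, eq_div_iff hD]
    unfold D; ring

lemma Coord.neg (C : Coord A h k u) : Coord A h (-k) (-u) where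
  inj x h1 h2 := C.inj x h1 (by simpa using h2)
  hu := by simp [C.hu]
  ku := by simp [C.ku]
  hd := C.hd
  gen := C.gen

/-- The sides of a triangle at a vertex are linearly independent. -/
lemma D_ne_zero (hT : IsTriangulation A T) (C : Coord A h k u) {p q r : Plane}
    (hs : {p, q, r} ∈ T.faces) (hq : q ≠ p) (hr : r ≠ p) (hqr : q ≠ r) :
    D h k (q - p) (r - p) ≠ 0 := by
  classical
  intro hD
  have hp : p ∉ ({q, r} : Finset Plane) := by simp [hq.symm, hr.symm]
  have hA := faces_subset hT hs
  set f : Plane → ℝ := fun x => if x = q then h (r - p) else if x = r then - h (q - p)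
    else h (q - p) - h (r - p) with hf
  have fp : f p = h (q - p) - h (r - p) := by simp [hf, hq.symm, hr.symm]
  have fq : f q = h (r - p) := by simp [hf]
  have fr : f r = - h (q - p) := by simp [hf, hqr.symm]
  have a1 : ∑ j : ({p, q, r} : Finset Plane), f j = 0 := by
    rw [Finset.sum_coe_sort _ f, Finset.sum_insert hp, Finset.sum_pair hqr, fp, fq, fr]; ring
  have a2 : ∑ j : ({p, q, r} : Finset Plane), f j • (j : Plane) = 0 := by
    rw [Finset.sum_coe_sort _ (fun j => f j • j), Finset.sum_insert hp, Finset.sum_pair hqr,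
      fp, fq, fr]
    unfold D at hD
    simp only [map_sub] at hD ⊢
    apply C.inj
    · simp only [map_add, map_smul, smul_eq_mul]; ring
    · simp only [map_add, map_smul, smul_eq_mul]; linear_combination hD
  have := affineIndependent_iff.1 (T.indep hs) Finset.univ (fun j => f j) a1 a2
    ⟨r, by simp⟩ (Finset.mem_univ _)
  simp only [fr, map_sub] at this
  exact hq (C.gen _ (hA (by simp)) _ (hA (by simp)) (by linarith))

open Classical in
/-- Triangles `(p, q, r)` with `p` the vertex of middle height, `q` lowest and `r` highest. -/
noncomputable def midTri (A : Finset Plane) (T : SimplicialComplex ℝ Plane)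
    (h : Plane →ₗ[ℝ] ℝ) : Finset (Plane × Plane × Plane) :=
  (A ×ˢ A ×ˢ A).filter fun x => {x.1, x.2.1, x.2.2} ∈ T.faces ∧ h x.2.1 < h x.1 ∧ h x.1 < h x.2.2

lemma mem_midTri (hT : IsTriangulation A T) {p q r : Plane} : (p, q, r) ∈ midTri A T h ↔
    {p, q, r} ∈ T.faces ∧ h q < h p ∧ h p < h r := by
  simp only [midTri, Finset.mem_filter, Finset.mem_product, and_iff_right_iff_imp]
  intro hs
  have := faces_subset hT hs.1
  exact ⟨this (by simp), this (by simp), this (by simp)⟩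

lemma card_midTri (hT : IsTriangulation A T) (C : Coord A h k u) :
    {s : Finset Plane | s ∈ T.faces ∧ s.card = 3}.ncard = (midTri A T h).card := by
  classical
  have : {s : Finset Plane | s ∈ T.faces ∧ s.card = 3} =
      (fun x : Plane × Plane × Plane => ({x.1, x.2.1, x.2.2} : Finset Plane)) ''
        (midTri A T h : Set (Plane × Plane × Plane)) := by
    ext s
    constructor
    · rintro ⟨hs, h3⟩
      obtain ⟨a, b, c, hab, hac, hbc, rfl⟩ := Finset.card_eq_three.1 h3
      have hA := faces_subset hT hs
      have haA : a ∈ A := hA (by simp)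
      have hbA : b ∈ A := hA (by simp)
      have hcA : c ∈ A := hA (by simp)
      have key : ∀ p q r : Plane, ({p, q, r} : Finset Plane) = {a, b, c} → h q < h p → h p < h r →
          ({a, b, c} : Finset Plane) ∈ (fun x : Plane × Plane × Plane =>
          ({x.1, x.2.1, x.2.2} : Finset Plane)) '' (midTri A T h : Set _) := by
        intro p q r he h1 h2
        exact ⟨(p, q, r), (mem_midTri hT).2 ⟨he ▸ hs, h1, h2⟩, he⟩
      rcases lt_or_gt_of_ne (fun e => hab (C.gen _ haA _ hbA e)) with h1 | h1 <;>
      rcases lt_or_gt_of_ne (fun e => hac (C.gen _ haA _ hcA e)) with h2 | h2 <;>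
      rcases lt_or_gt_of_ne (fun e => hbc (C.gen _ hbA _ hcA e)) with h3 | h3
      · exact key b a c (by grind) h1 h3
      · exact key c a b (by grind) h2 h3
      · linarith
      · exact key a c b (by grind) h2 h1
      · exact key a b c (by grind) h1 h2
      · linarith
      · exact key c b a (by grind) h3 h2
      · exact key b c a (by grind) h3 h1
    · rintro ⟨⟨p, q, r⟩, hx, rfl⟩
      obtain ⟨hs, h1, h2⟩ := (mem_midTri hT).1 hx
      refine ⟨hs, Finset.card_eq_three.2 ⟨p, q, r, ?_, ?_, ?_, rfl⟩⟩ <;> rintro rfl <;> linarith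
  rw [this, Set.InjOn.ncard_image, Set.ncard_coe_finset]
  rintro ⟨p, q, r⟩ hx ⟨p', q', r'⟩ hx' he
  obtain ⟨hs, h1, h2⟩ := (mem_midTri hT).1 hx
  obtain ⟨hs', h1', h2'⟩ := (mem_midTri hT).1 hx'
  dsimp only at he
  have m1 : p' ∈ ({p, q, r} : Finset Plane) := he ▸ (by simp)
  have m2 : q' ∈ ({p, q, r} : Finset Plane) := he ▸ (by simp)
  have m3 : r' ∈ ({p, q, r} : Finset Plane) := he ▸ (by simp)
  simp only [Finset.mem_insert, Finset.mem_singleton] at m1 m2 m3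
  rcases m1 with rfl | rfl | rfl <;> rcases m2 with rfl | rfl | rfl <;>
    rcases m3 with rfl | rfl | rfl <;> first | rfl | (exfalso; linarith)

/-- The direction `w` at `p` points into the hull of `A`. -/
def Inward (A : Finset Plane) (w p : Plane) : Prop :=
  ∃ δ : ℝ, 0 < δ ∧ p + δ • w ∈ convexHull ℝ (A : Set Plane)

/-- The horizontal germ at `p` in an inward direction lies in a triangle with middle vertex `p`,
since no edge is horizontal. -/
lemma exists_midTri (hT : IsTriangulation A T) (C : Coord A h k u) {p : Plane} (hp : p ∈ A)
    (hin : Inward A u p) :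
    ∃ q r, (p, q, r) ∈ midTri A T h ∧ 0 < D h k (q - p) (r - p) := by
  have hu0 : u ≠ 0 := by rintro rfl; simpa using C.ku
  obtain ⟨δ, hδ, hin⟩ := hin
  rcases exists_cone hT hp hu0 hδ hin with ⟨q, c, hc, hqp, hs, hw⟩ |
    ⟨q, r, c, d, hc, hd, hqp, hrp, hqr, hs, hw⟩
  · exfalso
    have := congrArg h hw
    rw [map_smul, map_sub, C.hu, smul_eq_mul, eq_comm, mul_eq_zero] at this
    have hA := faces_subset hT hs
    exact hqp (C.gen _ (hA (by simp)) _ hp (by rcases this with h | h <;> linarith))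
  · have hA := faces_subset hT hs
    have hqA : q ∈ A := hA (by simp)
    have hrA : r ∈ A := hA (by simp)
    have e1 := congrArg h hw
    have e2 := congrArg k hw
    simp only [map_add, map_smul, C.hu, C.ku, smul_eq_mul] at e1 e2
    have hhq : h (q - p) ≠ 0 := fun h0 => hqp (C.gen _ hqA _ hp (by
      rw [map_sub] at h0; linarith))
    rcases lt_or_gt_of_ne hhq with hneg | hpos
    · have hr1 : 0 < h (r - p) := by
        by_contra hcon
        nlinarith [mul_neg_of_pos_of_neg hc hneg]
      refine ⟨q, r, (mem_midTri hT).2 ⟨hs, ?_, ?_⟩, ?_⟩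
      · rw [map_sub] at hneg; linarith
      · rw [map_sub] at hr1; linarith
      · dsimp only [D]
        have : d * (h (r - p) * k (q - p) - h (q - p) * k (r - p)) = - h (q - p) := by
          linear_combination (h (q-p)) * e2 - k (q - p) * e1
        by_contra hcon
        nlinarith
    · have hr1 : h (r - p) < 0 := by
        by_contra hcon
        nlinarith [mul_pos hc hpos]
      refine ⟨r, q, (mem_midTri hT).2 ⟨?_, ?_, ?_⟩, ?_⟩
      · rwa [Finset.pair_comm]
      · rw [map_sub] at hr1; linarith
      · rw [map_sub] at hpos; linarith
      · dsimp only [D]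
        have : d * (h (q - p) * k (r - p) - h (r - p) * k (q - p)) = h (q - p) := by
          linear_combination - (h (q-p)) * e2 + k (q - p) * e1
        by_contra hcon
        nlinarith

open Classical in
/-- A triangle whose middle vertex `p` lies on the side of smaller `k` of the opposite edge is the one which
contains the horizontal germ at `p` in direction `u`. -/
lemma card_midTri_side (hT : IsTriangulation A T) (C : Coord A h k u) :
    ((midTri A T h).filter fun x => 0 < D h k (x.2.1 - x.1) (x.2.2 - x.1)).card =
      (A.filter (Inward A u)).card := by
  -- the combination of the two side vectors that is horizontal
  have comb : ∀ p q r : Plane, h (r - p) • (q - p) + (- h (q - p)) • (r - p)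
      = D h k (q - p) (r - p) • u := by
    intro p q r
    apply C.ext
    · simp only [map_add, map_smul, smul_eq_mul, C.hu]; ring
    · simp only [map_add, map_smul, smul_eq_mul, C.ku, D]; ring
  refine Finset.card_bij (fun x _ => x.1) ?_ ?_ ?_
  · rintro ⟨p, q, r⟩ hx
    obtain ⟨hx, hD⟩ := Finset.mem_filter.1 hx
    obtain ⟨hs, h1, h2⟩ := (mem_midTri hT).1 hx
    have hA := faces_subset hT hs
    have hp : p ∈ A := hA (by simp)
    refine Finset.mem_filter.2 ⟨hp, ?_⟩
    dsimp only at hD ⊢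
    have hq1 : 0 < h r - h p := by linarith
    have hr1 : 0 < h p - h q := by linarith
    have hM : 0 < 2 * (h r - h q) := by linarith
    have hmem := openHull_subset _ (mem_openHull_triple (p := p) (q := q) (r := r)
      (by rintro rfl; linarith) (by rintro rfl; linarith) (by rintro rfl; linarith)
      (a := (2 * (h r - h q))⁻¹ * (h r - h p)) (b := (2 * (h r - h q))⁻¹ * (h p - h q))
      (by positivity) (by positivity)
      (by rw [← mul_add, inv_mul_lt_one₀ hM]; linarith))
    refine ⟨(2 * (h r - h q))⁻¹ * D h k (q - p) (r - p), by positivity, ?_⟩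
    rw [mul_smul, ← comb]
    have e : -h (q - p) = h p - h q := by simp
    rw [mul_smul, mul_smul, ← smul_add] at hmem
    rw [e, map_sub]
    exact convexHull_mono (by exact_mod_cast hA) hmem
  · rintro ⟨p, q, r⟩ hx ⟨p', q', r'⟩ hx' rfl
    obtain ⟨hx, hD⟩ := Finset.mem_filter.1 hx
    obtain ⟨hs, h1, h2⟩ := (mem_midTri hT).1 hx
    obtain ⟨hx', hD'⟩ := Finset.mem_filter.1 hx'
    obtain ⟨hs', h1', h2'⟩ := (mem_midTri hT).1 hx'
    dsimp only at hD hD' h1' h2' hs' ⊢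
    have e := comb p q r
    have e' := comb p q' r'
    have hq1 : 0 < h (r - p) := by rw [map_sub]; linarith
    have hr1 : 0 < - h (q - p) := by rw [map_sub]; linarith
    have hq1' : 0 < h (r' - p) := by rw [map_sub]; linarith
    have hr1' : 0 < - h (q' - p) := by rw [map_sub]; linarith
    have he := tri_tri (p := p) (q := q) (r := r) (q' := q') (r' := r')
      (by rintro rfl; linarith) (by rintro rfl; linarith) (by rintro rfl; linarith)
      (by rintro rfl; linarith) (by rintro rfl; linarith) (by rintro rfl; linarith) hs hs'
      (mul_pos hD' hq1) (mul_pos hD' hr1) (mul_pos hD hq1') (mul_pos hD hr1')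
      (by rw [mul_smul, mul_smul, ← smul_add, e, mul_smul, mul_smul, ← smul_add, e',
        smul_smul, smul_smul, mul_comm])
    have m2 : q' ∈ ({p, q, r} : Finset Plane) := he ▸ (by simp)
    have m3 : r' ∈ ({p, q, r} : Finset Plane) := he ▸ (by simp)
    simp only [Finset.mem_insert, Finset.mem_singleton] at m2 m3
    rcases m2 with rfl | rfl | rfl <;>
      rcases m3 with rfl | rfl | rfl <;> first | rfl | (exfalso; linarith)
  · intro p hp
    obtain ⟨hp, hin⟩ := Finset.mem_filter.1 hp
    obtain ⟨q, r, hx, hD⟩ := exists_midTri hT C hp hin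
    exact ⟨(p, q, r), Finset.mem_filter.2 ⟨hx, hD⟩, rfl⟩

/-! ### Middle vertices and the number of triangles -/

lemma interior_inward {p : Plane} (hp : p ∈ interior (convexHull ℝ (A : Set Plane))) (w : Plane) :
    Inward A w p := by
  have hcont : Continuous fun ε : ℝ => p + ε • w := by fun_prop
  have hev : ∀ᶠ ε in nhds (0 : ℝ), p + ε • w ∈ interior (convexHull ℝ (A : Set Plane)) := by
    apply hcont.continuousAt.eventually_mem
    apply isOpen_interior.mem_nhds
    simpa using hp
  obtain ⟨η, hη, hball⟩ := Metric.eventually_nhds_iff.1 hev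
  refine ⟨η / 2, by linarith, interior_subset (@hball (η / 2) ?_)⟩
  rw [Real.dist_eq, sub_zero, abs_of_pos (by linarith)]
  linarith

lemma exists_lower (C : Coord A h k u) {p : Plane}
    (hp : p ∈ interior (convexHull ℝ (A : Set Plane))) : ∃ a ∈ A, h a < h p := by
  obtain ⟨d, hd⟩ := C.hd
  obtain ⟨δ, hδ, hin⟩ := interior_inward hp (-d)
  by_contra! hcon
  have hsub : convexHull ℝ (A : Set Plane) ⊆ h ⁻¹' Set.Ici (h p) :=
    convexHull_min (fun a ha => hcon a ha) ((convex_Ici _).linear_preimage h)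
  have := hsub hin
  simp [hd] at this
  linarith

lemma exists_upper (C : Coord A h k u) {p : Plane}
    (hp : p ∈ interior (convexHull ℝ (A : Set Plane))) : ∃ a ∈ A, h p < h a := by
  obtain ⟨d, hd⟩ := C.hd
  obtain ⟨δ, hδ, hin⟩ := interior_inward hp d
  by_contra! hcon
  have hsub : convexHull ℝ (A : Set Plane) ⊆ h ⁻¹' Set.Iic (h p) :=
    convexHull_min (fun a ha => hcon a ha) ((convex_Iic _).linear_preimage h)
  have := hsub hin
  simp [hd] at this
  linarith

/-- A segment from an interior point `z` to a point `y` of the hull on the other side of the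
horizontal line through `p` crosses that line at an interior point. -/
lemma exists_horiz_aux (C : Coord A h k u) {p y z : Plane}
    (hy : y ∈ convexHull ℝ (A : Set Plane)) (hz : z ∈ interior (convexHull ℝ (A : Set Plane)))
    (hyz : (h y - h p) * (h z - h p) < 0) :
    ∃ κ : ℝ, p + κ • u ∈ interior (convexHull ℝ (A : Set Plane)) := by
  have hne : h z - h y ≠ 0 := by
    intro e
    have : h z = h y := by linarith
    rw [this] at hyz
    nlinarith [mul_self_nonneg (h y - h p)]
  have h1 : 0 < (h p - h y) / (h z - h y) ∧ 0 < (h z - h p) / (h z - h y) := by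
    rcases lt_or_gt_of_ne hne with hlt | hgt
    · constructor <;> apply div_pos_of_neg_of_neg _ hlt <;> by_contra hcon <;> nlinarith
    · constructor <;> apply div_pos _ hgt <;> by_contra hcon <;> nlinarith
  have hmem := (convex_convexHull ℝ (A : Set Plane)).openSegment_interior_self_subset_interior hz hy
    ⟨_, _, h1.1, h1.2, by rw [← add_div, div_eq_one_iff_eq hne]; ring, rfl⟩
  refine ⟨k ((((h p - h y) / (h z - h y)) • z + ((h z - h p) / (h z - h y)) • y) - p), ?_⟩
  convert hmem using 1
  apply C.ext
  · simp only [map_add, map_smul, smul_eq_mul, C.hu]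
    field_simp
    ring
  · simp only [map_add, map_smul, map_sub, smul_eq_mul, C.ku]
    ring

/-- The horizontal line through a point strictly between the lowest and highest points meets the
interior of the hull. -/
lemma exists_horiz (C : Coord A h k u) (hdim : affineSpan ℝ (A : Set Plane) = ⊤) {p : Plane}
    (h1 : ∃ a ∈ A, h a < h p) (h2 : ∃ a ∈ A, h p < h a) :
    ∃ κ : ℝ, p + κ • u ∈ interior (convexHull ℝ (A : Set Plane)) := by
  obtain ⟨z, hz⟩ := interior_convexHull_nonempty_iff_affineSpan_eq_top.2 hdim
  obtain ⟨a, ha, hap⟩ := h1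
  obtain ⟨b, hb, hpb⟩ := h2
  rcases lt_trichotomy (h z) (h p) with hlt | heq | hgt
  · exact exists_horiz_aux C (subset_convexHull ℝ _ hb) hz
      (mul_neg_of_pos_of_neg (by linarith) (by linarith))
  · refine ⟨k (z - p), ?_⟩
    convert hz using 1
    apply C.ext
    · simp [C.hu, heq]
    · simp [C.ku]
  · exact exists_horiz_aux C (subset_convexHull ℝ _ ha) hz
      (mul_neg_of_neg_of_pos (by linarith) (by linarith))

/-- Some horizontal direction at `p` is inward exactly when `p` is neither lowest nor highest. -/
lemma inward_or_iff (hT : IsTriangulation A T) (C : Coord A h k u)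
    (hdim : affineSpan ℝ (A : Set Plane) = ⊤) {p : Plane} (hp : p ∈ A) :
    Inward A u p ∨ Inward A (-u) p ↔ (∃ a ∈ A, h a < h p) ∧ (∃ a ∈ A, h p < h a) := by
  constructor
  · have key : ∀ {k u}, Coord A h k u → Inward A u p →
        (∃ a ∈ A, h a < h p) ∧ (∃ a ∈ A, h p < h a) := by
      intro k u C hin
      obtain ⟨q, r, hx, -⟩ := exists_midTri hT C hp hin
      obtain ⟨hs, h1, h2⟩ := (mem_midTri hT).1 hx
      have hA := faces_subset hT hs
      exact ⟨⟨q, hA (by simp), h1⟩, ⟨r, hA (by simp), h2⟩⟩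
    rintro (hin | hin)
    · exact key C hin
    · exact key C.neg hin
  · rintro ⟨h1, h2⟩
    obtain ⟨κ, hκ⟩ := exists_horiz C hdim h1 h2
    rcases lt_trichotomy κ 0 with hlt | rfl | hgt
    · exact Or.inr ⟨-κ, by linarith, by simpa using interior_subset hκ⟩
    · exact Or.inl (interior_inward (by simpa using hκ) u)
    · exact Or.inl ⟨κ, hgt, interior_subset hκ⟩

/-- Both horizontal directions at `p` are inward exactly when `p` is interior. For a non-extreme `p`
the horizontal line meets the interior of the hull somewhere, so `p` lies in an open segment from an
interior point to a point of the hull. -/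
lemma inward_and_iff (hT : IsTriangulation A T) (C : Coord A h k u)
    (hdim : affineSpan ℝ (A : Set Plane) = ⊤) {p : Plane} (hp : p ∈ A) :
    Inward A u p ∧ Inward A (-u) p ↔ p ∈ interior (convexHull ℝ (A : Set Plane)) := by
  constructor
  · rintro ⟨hin, hin'⟩
    obtain ⟨h1, h2⟩ := (inward_or_iff hT C hdim hp).1 (Or.inl hin)
    obtain ⟨κ, hκ⟩ := exists_horiz C hdim h1 h2
    have hseg := fun y hy =>
      (convex_convexHull ℝ (A : Set Plane)).openSegment_interior_self_subset_interior (y := y) hκ hy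
    obtain ⟨δ, hδ, hin⟩ := hin
    obtain ⟨δ', hδ', hin'⟩ := hin'
    rcases lt_trichotomy κ 0 with hlt | rfl | hgt
    · apply hseg _ hin
      have : 0 < δ - κ := by linarith
      refine ⟨δ / (δ - κ), -κ / (δ - κ), by positivity, div_pos (by linarith) this, ?_, ?_⟩
      · field_simp; ring
      · apply C.ext
        · simp only [map_add, map_smul, smul_eq_mul, C.hu]; field_simp; ring
        · simp only [map_add, map_smul, smul_eq_mul, C.ku]; field_simp; ring
    · simpa using hκ
    · apply hseg _ hin'
      have : 0 < δ' + κ := by linarith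
      refine ⟨δ' / (δ' + κ), κ / (δ' + κ), by positivity, by positivity, ?_, ?_⟩
      · field_simp
      · apply C.ext
        · simp only [map_add, map_smul, map_neg, smul_eq_mul, C.hu]; field_simp; ring
        · simp only [map_add, map_smul, map_neg, smul_eq_mul, C.ku]; field_simp; ring
  · intro hp
    exact ⟨interior_inward hp _, interior_inward hp _⟩

lemma exists_two (C : Coord A h k u) (hdim : affineSpan ℝ (A : Set Plane) = ⊤) :
    ∃ m ∈ A, ∃ M ∈ A, h m < h M ∧ (∀ a ∈ A, h m ≤ h a) ∧ (∀ a ∈ A, h a ≤ h M) := by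
  obtain ⟨z, hz⟩ := interior_convexHull_nonempty_iff_affineSpan_eq_top.2 hdim
  obtain ⟨a, ha, haz⟩ := exists_lower C hz
  obtain ⟨b, hb, hzb⟩ := exists_upper C hz
  obtain ⟨m, hm, hm'⟩ := A.exists_min_image h ⟨a, ha⟩
  obtain ⟨M, hM, hM'⟩ := A.exists_max_image h ⟨a, ha⟩
  exact ⟨m, hm, M, hM, by linarith [hm' a ha, hM' b hb], hm', hM'⟩

open Classical in
/-- The middle-vertex count: each interior point is the middle vertex of two triangles, each
boundary point other than the lowest and the highest of one. -/
lemma card_tri_eq (hT : IsTriangulation A T) (C : Coord A h k u)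
    (hdim : affineSpan ℝ (A : Set Plane) = ⊤) :
    (midTri A T h).card + 2 =
      (A.filter (· ∈ interior (convexHull ℝ (A : Set Plane)))).card + A.card := by
  have e1 := Finset.card_filter_add_card_filter_not (s := midTri A T h)
    (fun x => 0 < D h k (x.2.1 - x.1) (x.2.2 - x.1))
  have e2 : (midTri A T h).filter (fun x => ¬ 0 < D h k (x.2.1 - x.1) (x.2.2 - x.1)) =
      (midTri A T h).filter (fun x => 0 < D h (-k) (x.2.1 - x.1) (x.2.2 - x.1)) := by
    apply Finset.filter_congr
    rintro ⟨p, q, r⟩ hx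
    obtain ⟨hs, h1, h2⟩ := (mem_midTri hT).1 hx
    have hne := D_ne_zero hT C hs (by rintro rfl; linarith) (by rintro rfl; linarith)
      (by rintro rfl; linarith)
    have : D h (-k) (q - p) (r - p) = - D h k (q - p) (r - p) := by
      simp only [D, LinearMap.neg_apply]; ring
    dsimp only
    rw [this, not_lt, neg_pos]
    exact ⟨fun hle => lt_of_le_of_ne hle hne, le_of_lt⟩
  rw [e2, card_midTri_side hT C, card_midTri_side hT C.neg] at e1
  have e3 := Finset.card_union_add_card_inter (A.filter (Inward A u)) (A.filter (Inward A (-u)))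
  rw [← Finset.filter_or, ← Finset.filter_and,
    Finset.filter_congr (fun p hp => inward_or_iff hT C hdim hp),
    Finset.filter_congr (fun p hp => inward_and_iff hT C hdim hp)] at e3
  have e4 := Finset.card_filter_add_card_filter_not (s := A)
    (fun p => (∃ a ∈ A, h a < h p) ∧ (∃ a ∈ A, h p < h a))
  obtain ⟨m, hm, M, hM, hlt, hm', hM'⟩ := exists_two C hdim
  have e5 : A.filter (fun p => ¬ ((∃ a ∈ A, h a < h p) ∧ (∃ a ∈ A, h p < h a))) = {m, M} := by
    ext p
    simp only [Finset.mem_filter, Finset.mem_insert, Finset.mem_singleton]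
    constructor
    · rintro ⟨hp, hn⟩
      by_contra! hne
      exact hn ⟨⟨m, hm, lt_of_le_of_ne (hm' p hp) fun e => hne.1 (C.gen _ hp _ hm e.symm)⟩,
        ⟨M, hM, lt_of_le_of_ne (hM' p hp) fun e => hne.2 (C.gen _ hp _ hM e)⟩⟩
    · rintro (rfl | rfl)
      · refine ⟨hm, ?_⟩
        rintro ⟨⟨a, ha, hap⟩, -⟩
        linarith [hm' a ha]
      · refine ⟨hM, ?_⟩
        rintro ⟨-, ⟨a, ha, hap⟩⟩
        linarith [hM' a ha]
  rw [e5, Finset.card_pair (by rintro rfl; exact lt_irrefl _ hlt)] at e4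
  omega


/-! ### Top vertices and the number of edges -/

open Classical in
/-- Edges `(p, q)` with upper end `p`. -/
noncomputable def topEdge (A : Finset Plane) (T : SimplicialComplex ℝ Plane)
    (h : Plane →ₗ[ℝ] ℝ) : Finset (Plane × Plane) :=
  (A ×ˢ A).filter fun x => {x.1, x.2} ∈ T.faces ∧ h x.2 < h x.1

lemma mem_topEdge (hT : IsTriangulation A T) {p q : Plane} : (p, q) ∈ topEdge A T h ↔
    {p, q} ∈ T.faces ∧ h q < h p := by
  simp only [topEdge, Finset.mem_filter, Finset.mem_product, and_iff_right_iff_imp]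
  intro hs
  have := faces_subset hT hs.1
  exact ⟨this (by simp), this (by simp)⟩

open Classical in
/-- Triangles `(p, q, r)` with top vertex `p` and with `(q, r)` in the order fixed by `D`. -/
noncomputable def topTri (A : Finset Plane) (T : SimplicialComplex ℝ Plane)
    (h k : Plane →ₗ[ℝ] ℝ) : Finset (Plane × Plane × Plane) :=
  (A ×ˢ A ×ˢ A).filter fun x => {x.1, x.2.1, x.2.2} ∈ T.faces ∧ h x.2.1 < h x.1 ∧
    h x.2.2 < h x.1 ∧ 0 < D h k (x.2.1 - x.1) (x.2.2 - x.1)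

lemma mem_topTri (hT : IsTriangulation A T) {p q r : Plane} : (p, q, r) ∈ topTri A T h k ↔
    {p, q, r} ∈ T.faces ∧ h q < h p ∧ h r < h p ∧ 0 < D h k (q - p) (r - p) := by
  simp only [topTri, Finset.mem_filter, Finset.mem_product, and_iff_right_iff_imp]
  intro hs
  have := faces_subset hT hs.1
  exact ⟨this (by simp), this (by simp), this (by simp)⟩

lemma D_swap (x y : Plane) : D h k y x = - D h k x y := by unfold D; ring

lemma D_self (x : Plane) : D h k x x = 0 := by unfold D; ring

lemma card_topEdge (hT : IsTriangulation A T) (C : Coord A h k u) :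
    {s : Finset Plane | s ∈ T.faces ∧ s.card = 2}.ncard = (topEdge A T h).card := by
  classical
  have : {s : Finset Plane | s ∈ T.faces ∧ s.card = 2} =
      (fun x : Plane × Plane => ({x.1, x.2} : Finset Plane)) ''
        (topEdge A T h : Set (Plane × Plane)) := by
    ext s
    constructor
    · rintro ⟨hs, h2⟩
      obtain ⟨a, b, hab, rfl⟩ := Finset.card_eq_two.1 h2
      have hA := faces_subset hT hs
      have haA : a ∈ A := hA (by simp)
      have hbA : b ∈ A := hA (by simp)
      rcases lt_or_gt_of_ne (fun e => hab (C.gen _ haA _ hbA e)) with h1 | h1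
      · exact ⟨(b, a), (mem_topEdge hT).2 ⟨by rwa [Finset.pair_comm], h1⟩, Finset.pair_comm _ _⟩
      · exact ⟨(a, b), (mem_topEdge hT).2 ⟨hs, h1⟩, rfl⟩
    · rintro ⟨⟨p, q⟩, hx, rfl⟩
      obtain ⟨hs, h1⟩ := (mem_topEdge hT).1 hx
      exact ⟨hs, Finset.card_pair (ne_of_apply_ne h h1.ne')⟩
  rw [this, Set.InjOn.ncard_image, Set.ncard_coe_finset]
  rintro ⟨p, q⟩ hx ⟨p', q'⟩ hx' he
  obtain ⟨hs, h1⟩ := (mem_topEdge hT).1 hx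
  obtain ⟨hs', h1'⟩ := (mem_topEdge hT).1 hx'
  dsimp only at he
  have m1 : p' ∈ ({p, q} : Finset Plane) := he ▸ (by simp)
  have m2 : q' ∈ ({p, q} : Finset Plane) := he ▸ (by simp)
  simp only [Finset.mem_insert, Finset.mem_singleton] at m1 m2
  rcases m1 with rfl | rfl <;> rcases m2 with rfl | rfl <;> first | rfl | (exfalso; linarith)

lemma card_topTri (hT : IsTriangulation A T) (C : Coord A h k u) :
    {s : Finset Plane | s ∈ T.faces ∧ s.card = 3}.ncard = (topTri A T h k).card := by
  classical
  have : {s : Finset Plane | s ∈ T.faces ∧ s.card = 3} =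
      (fun x : Plane × Plane × Plane => ({x.1, x.2.1, x.2.2} : Finset Plane)) ''
        (topTri A T h k : Set (Plane × Plane × Plane)) := by
    ext s
    constructor
    · rintro ⟨hs, h3⟩
      obtain ⟨p, hp, hmax⟩ := s.exists_max_image h (Finset.card_pos.1 (by omega))
      have hce := Finset.card_erase_of_mem hp
      obtain ⟨q, r, hqr, he⟩ := Finset.card_eq_two.1 (hce.trans (by omega))
      have hins := Finset.insert_erase hp
      rw [he] at hins
      have hpe : p ∉ s.erase p := by simp
      rw [he] at hpe
      have hqp : q ≠ p := by rintro rfl; simp at hpe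
      have hrp : r ≠ p := by rintro rfl; simp at hpe
      have hA := faces_subset hT hs
      have hqs : q ∈ s := by rw [← hins]; simp
      have hrs : r ∈ s := by rw [← hins]; simp
      have h1 : h q < h p := lt_of_le_of_ne (hmax q hqs)
        fun e => hqp (C.gen _ (hA hqs) _ (hA hp) e)
      have h2 : h r < h p := lt_of_le_of_ne (hmax r hrs)
        fun e => hrp (C.gen _ (hA hrs) _ (hA hp) e)
      rw [← hins] at hs
      rcases lt_or_gt_of_ne (D_ne_zero hT C hs hqp hrp hqr) with hD | hD
      · refine ⟨(p, r, q), (mem_topTri hT).2 ⟨by rwa [Finset.pair_comm], h2, h1, ?_⟩, ?_⟩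
        · rw [D_swap]; linarith
        · dsimp only; rw [Finset.pair_comm, hins]
      · exact ⟨(p, q, r), (mem_topTri hT).2 ⟨hs, h1, h2, hD⟩, hins⟩
    · rintro ⟨⟨p, q, r⟩, hx, rfl⟩
      obtain ⟨hs, h1, h2, hD⟩ := (mem_topTri hT).1 hx
      refine ⟨hs, Finset.card_eq_three.2 ⟨p, q, r, ?_, ?_, ?_, rfl⟩⟩
      · rintro rfl; linarith
      · rintro rfl; linarith
      · rintro rfl; rw [D_self] at hD; exact lt_irrefl _ hD
  rw [this, Set.InjOn.ncard_image, Set.ncard_coe_finset]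
  rintro ⟨p, q, r⟩ hx ⟨p', q', r'⟩ hx' he
  obtain ⟨hs, h1, h2, hD⟩ := (mem_topTri hT).1 hx
  obtain ⟨hs', h1', h2', hD'⟩ := (mem_topTri hT).1 hx'
  dsimp only at he
  have m1 : p' ∈ ({p, q, r} : Finset Plane) := he ▸ (by simp)
  have m2 : q' ∈ ({p, q, r} : Finset Plane) := he ▸ (by simp)
  have m3 : r' ∈ ({p, q, r} : Finset Plane) := he ▸ (by simp)
  have m4 : p ∈ ({p', q', r'} : Finset Plane) := he ▸ (by simp)
  simp only [Finset.mem_insert, Finset.mem_singleton] at m1 m2 m3 m4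
  have hpp : p' = p := by
    by_contra hne
    have l1 : h p' < h p := by
      rcases m1 with e | e | e
      · exact absurd e hne
      · rwa [e]
      · rwa [e]
    have l2 : h p < h p' := by
      rcases m4 with e | e | e
      · exact absurd e.symm hne
      · rwa [e]
      · rwa [e]
    exact lt_asymm l1 l2
  subst hpp
  have hne : ∀ x, 0 < D h k (x - p') (x - p') → False := fun x hx => by
    rw [D_self] at hx; exact lt_irrefl _ hx
  rcases m2 with rfl | rfl | rfl
  · exact absurd h1' (lt_irrefl _)
  · rcases m3 with rfl | rfl | rfl
    · exact absurd h2' (lt_irrefl _)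
    · exact (hne _ hD').elim
    · rfl
  · rcases m3 with rfl | rfl | rfl
    · exact absurd h2' (lt_irrefl _)
    · rw [D_swap] at hD'; linarith
    · exact (hne _ hD').elim

/-- An edge at `p` inside the open cone of a triangle at `p` is impossible. -/
lemma not_between (hT : IsTriangulation A T) (C : Coord A h k u) {p a b x : Plane}
    (hs : {p, a, b} ∈ T.faces) (ha : a ≠ p) (hb : b ≠ p) (hD : 0 < D h k (a - p) (b - p))
    (hx : {p, x} ∈ T.faces) (hxp : x ≠ p)
    (h1 : 0 < D h k (a - p) (x - p)) (h2 : 0 < D h k (x - p) (b - p)) : False :=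
  ray_tri ha hb (by rintro rfl; rw [D_self] at hD; exact lt_irrefl _ hD) hxp hs hx
    (div_pos h2 hD) (div_pos h1 hD) (C.expand hD.ne')

/-- Distinct downward edges at `p` are not parallel. -/
lemma eq_of_parallel (C : Coord A h k u) {p q q' : Plane} (hs : (p, q) ∈ topEdge A T h)
    (hT : IsTriangulation A T)
    (hs' : (p, q') ∈ topEdge A T h) (hD : D h k (q - p) (q' - p) = 0) : q = q' := by
  obtain ⟨hf, hq⟩ := (mem_topEdge hT).1 hs
  obtain ⟨hf', hq'⟩ := (mem_topEdge hT).1 hs'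
  have h1 : h (q - p) < 0 := by rw [map_sub]; linarith
  have h2 : h (q' - p) < 0 := by rw [map_sub]; linarith
  refine ray_ray (by rintro rfl; linarith) (by rintro rfl; linarith) hf hf'
    (div_pos_of_neg_of_neg h1 h2) ?_
  apply C.ext
  · rw [map_smul, smul_eq_mul, div_mul_cancel₀ _ h2.ne]
  · rw [map_smul, smul_eq_mul, div_mul_eq_mul_div, eq_div_iff h2.ne]
    unfold D at hD
    linarith

/-- Two downward edges at `p` with no downward edge strictly between them span a triangle. -/
lemma consecutive (hT : IsTriangulation A T) (C : Coord A h k u) {p q q' : Plane}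
    (hs : (p, q) ∈ topEdge A T h) (hs' : (p, q') ∈ topEdge A T h)
    (hD : 0 < D h k (q - p) (q' - p))
    (hno : ∀ x, (p, x) ∈ topEdge A T h → 0 < D h k (q - p) (x - p) →
      0 < D h k (x - p) (q' - p) → False) : (p, q, q') ∈ topTri A T h k := by
  obtain ⟨hf, hq⟩ := (mem_topEdge hT).1 hs
  obtain ⟨hf', hq'⟩ := (mem_topEdge hT).1 hs'
  have hqp : q ≠ p := by rintro rfl; linarith
  have hqp' : q' ≠ p := by rintro rfl; linarith
  have hA := faces_subset hT hf
  have hA' := faces_subset hT hf'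
  have hpA : p ∈ A := hA (by simp)
  have hhq : h (q - p) < 0 := by rw [map_sub]; linarith
  have hhq' : h (q' - p) < 0 := by rw [map_sub]; linarith
  -- the direction bisecting the two edges
  have hin : p + (1 / 2 : ℝ) • ((q - p) + (q' - p)) ∈ convexHull ℝ (A : Set Plane) := by
    have := convex_convexHull ℝ (A : Set Plane) (subset_convexHull ℝ _ (hA (by simp : q ∈ _)))
      (subset_convexHull ℝ _ (hA' (by simp : q' ∈ _))) (a := 1 / 2) (b := 1 / 2) (by norm_num)
      (by norm_num) (by norm_num)
    convert this using 1
    module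
  have hw0 : (q - p) + (q' - p) ≠ 0 := by
    intro e
    have := congrArg h e
    rw [map_add, map_zero] at this
    linarith
  rcases exists_cone hT hpA hw0 (by norm_num) hin with ⟨a, c, hc, hap, hfa, hw⟩ |
    ⟨a, b, c, d, hc, hd, hap, hbp, hab, hfab, hw⟩
  · have e1 := congrArg h hw
    have e2 := congrArg k hw
    simp only [map_add, map_smul, smul_eq_mul] at e1 e2
    have hha : h (a - p) < 0 := by
      by_contra hcon
      nlinarith
    exfalso
    refine hno a ((mem_topEdge hT).2 ⟨hfa, by rw [map_sub] at hha; linarith⟩) ?_ ?_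
    · have : c * D h k (q - p) (a - p) = D h k (q - p) (q' - p) := by
        unfold D; linear_combination h (q - p) * e2 - k (q - p) * e1
      by_contra hcon
      nlinarith
    · have : c * D h k (a - p) (q' - p) = D h k (q - p) (q' - p) := by
        unfold D; linear_combination - h (q' - p) * e2 + k (q' - p) * e1
      by_contra hcon
      nlinarith
  · -- the triangle containing the bisecting direction has its sides on the two edges
    have key : ∀ (a b : Plane) (c d : ℝ), 0 < c → 0 < d → a ≠ p → b ≠ p → {p, a, b} ∈ T.faces →
        (q - p) + (q' - p) = c • (a - p) + d • (b - p) → 0 < D h k (a - p) (b - p) →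
        {p, q, q'} ∈ T.faces := by
      intro a b c d hc hd hap hbp hfab hw hDab
      have e1 := congrArg h hw
      have e2 := congrArg k hw
      simp only [map_add, map_smul, smul_eq_mul] at e1 e2
      have i1 : D h k (a - p) (q - p) + D h k (a - p) (q' - p) = d * D h k (a - p) (b - p) := by
        unfold D; linear_combination k (a - p) * e1 - h (a - p) * e2
      have i2 : D h k (q - p) (b - p) + D h k (q' - p) (b - p) = c * D h k (a - p) (b - p) := by
        unfold D; linear_combination - k (b - p) * e1 + h (b - p) * e2
      have i3 : c * D h k (q - p) (a - p) + d * D h k (q - p) (b - p) =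
          D h k (q - p) (q' - p) := by
        unfold D; linear_combination - k (q - p) * e1 + h (q - p) * e2
      have hcD := mul_pos hc hDab
      have hdD := mul_pos hd hDab
      have nq : ¬ (0 < D h k (a - p) (q - p) ∧ 0 < D h k (q - p) (b - p)) :=
        fun hh => not_between hT C hfab hap hbp hDab hf hqp hh.1 hh.2
      have nq' : ¬ (0 < D h k (a - p) (q' - p) ∧ 0 < D h k (q' - p) (b - p)) :=
        fun hh => not_between hT C hfab hap hbp hDab hf' hqp' hh.1 hh.2
      have sq := D_swap (h := h) (k := k) (a - p) (q - p)
      have sb := D_swap (h := h) (k := k) (b - p) (q' - p)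
      have c1 : D h k (a - p) (q - p) ≤ 0 := by
        by_contra hcon
        push Not at hcon
        have : D h k (q - p) (b - p) ≤ 0 := by
          by_contra hcon'
          exact nq ⟨hcon, by linarith⟩
        nlinarith [mul_pos hc hcon]
      have c2 : 0 < D h k (a - p) (q' - p) := by linarith
      have c3 : D h k (q' - p) (b - p) ≤ 0 := by
        by_contra hcon
        exact nq' ⟨c2, by linarith⟩
      have c4 : 0 < D h k (q - p) (b - p) := by linarith
      have ea := congrArg h (C.expand (x := a - p) hD.ne')
      have eb := congrArg h (C.expand (x := b - p) hD.ne')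
      simp only [map_add, map_smul, smul_eq_mul] at ea eb
      have hA2 := faces_subset hT hfab
      have la : h a < h p := by
        have x1 := mul_neg_of_pos_of_neg (div_pos c2 hD) hhq
        have x2 : D h k (q - p) (a - p) / D h k (q - p) (q' - p) * h (q' - p) ≤ 0 :=
          mul_nonpos_of_nonneg_of_nonpos (div_nonneg (by linarith) hD.le) hhq'.le
        have : h (a - p) < 0 := by linarith
        rw [map_sub] at this; linarith
      have lb : h b < h p := by
        have x1 := mul_neg_of_pos_of_neg (div_pos c4 hD) hhq'
        have x2 : D h k (b - p) (q' - p) / D h k (q - p) (q' - p) * h (q - p) ≤ 0 :=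
          mul_nonpos_of_nonneg_of_nonpos (div_nonneg (by linarith) hD.le) hhq.le
        have : h (b - p) < 0 := by linarith
        rw [map_sub] at this; linarith
      have ha : (p, a) ∈ topEdge A T h :=
        (mem_topEdge hT).2 ⟨T.down_closed hfab (by grind) (by simp), la⟩
      have hb : (p, b) ∈ topEdge A T h :=
        (mem_topEdge hT).2 ⟨T.down_closed hfab (by grind) (by simp), lb⟩
      have eqa : q = a := by
        apply eq_of_parallel C hs hT ha
        by_contra hne
        exact hno a ha (lt_of_le_of_ne (by linarith) (Ne.symm hne)) c2
      have eqb : b = q' := by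
        apply eq_of_parallel C hb hT hs'
        by_contra hne
        exact hno b hb c4 (lt_of_le_of_ne (by linarith) (Ne.symm hne))
      rw [eqa, ← eqb]
      exact hfab
    refine (mem_topTri hT).2 ⟨?_, hq, hq', hD⟩
    rcases lt_or_gt_of_ne (D_ne_zero hT C hfab hap hbp hab) with hneg | hpos
    · exact key b a d c hd hc hbp hap (by rwa [Finset.pair_comm]) (by rw [hw, add_comm])
        (by rw [D_swap]; linarith)
    · exact key a b c d hc hd hap hbp hfab hw hpos

lemma exists_topEdge (hT : IsTriangulation A T) {p m : Plane} (hp : p ∈ A)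
    (hm : m ∈ A) (hmp : h m < h p) : ∃ q, (p, q) ∈ topEdge A T h := by
  have hw0 : m - p ≠ 0 := by
    intro e
    rw [sub_eq_zero] at e
    rw [e] at hmp
    exact lt_irrefl _ hmp
  have hin : p + (1 : ℝ) • (m - p) ∈ convexHull ℝ (A : Set Plane) := by
    rw [one_smul, add_sub_cancel]
    exact subset_convexHull ℝ _ hm
  rcases exists_cone hT hp hw0 one_pos hin with ⟨a, c, hc, hap, hfa, hw⟩ |
    ⟨a, b, c, d, hc, hd, hap, hbp, hab, hfab, hw⟩
  · have e1 := congrArg h hw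
    simp only [map_smul, map_sub, smul_eq_mul] at e1
    refine ⟨a, (mem_topEdge hT).2 ⟨hfa, ?_⟩⟩
    by_contra hcon
    nlinarith
  · have e1 := congrArg h hw
    simp only [map_add, map_smul, map_sub, smul_eq_mul] at e1
    by_cases ha : h a < h p
    · exact ⟨a, (mem_topEdge hT).2 ⟨T.down_closed hfab (by grind) (by simp), ha⟩⟩
    · refine ⟨b, (mem_topEdge hT).2 ⟨T.down_closed hfab (by grind) (by simp), ?_⟩⟩
      by_contra hcon
      nlinarith

/-- The slope comparison that makes `D` a linear order on downward vectors. -/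
lemma D_pos_iff {x y : Plane} (hx : h x < 0) (hy : h y < 0) :
    0 < D h k x y ↔ k y / h y < k x / h x := by
  rw [← neg_div_neg_eq (k y), ← neg_div_neg_eq (k x),
    div_lt_div_iff₀ (by linarith) (by linarith)]
  unfold D
  constructor <;> intro <;> linarith

open Classical in
/-- Every downward edge at `p` but the last one is the first side of exactly one triangle with
top vertex `p`; only the lowest vertex has no downward edge. -/
lemma card_edge_eq (hT : IsTriangulation A T) (C : Coord A h k u)
    (hdim : affineSpan ℝ (A : Set Plane) = ⊤) :
    (topEdge A T h).card + 1 = (topTri A T h k).card + A.card := by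
  have lo : ∀ {p q}, (p, q) ∈ topEdge A T h → h (q - p) < 0 := fun hx => by
    have := ((mem_topEdge hT).1 hx).2
    rw [map_sub]; linarith
  have e1 := Finset.card_filter_add_card_filter_not (s := topEdge A T h)
    (fun x => ∃ r, (x.1, r) ∈ topEdge A T h ∧ 0 < D h k (x.2 - x.1) (r - x.1))
  have e2 : (topTri A T h k).card = ((topEdge A T h).filter
      (fun x => ∃ r, (x.1, r) ∈ topEdge A T h ∧ 0 < D h k (x.2 - x.1) (r - x.1))).card := by
    refine Finset.card_bij (fun x _ => (x.1, x.2.1)) ?_ ?_ ?_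
    · rintro ⟨p, q, r⟩ hx
      obtain ⟨hs, h1, h2, hD⟩ := (mem_topTri hT).1 hx
      exact Finset.mem_filter.2
        ⟨(mem_topEdge hT).2 ⟨T.down_closed hs (by grind) (by simp), h1⟩, r,
          (mem_topEdge hT).2 ⟨T.down_closed hs (by grind) (by simp), h2⟩, hD⟩
    · rintro ⟨p, q, r⟩ hx ⟨p', q', r'⟩ hx' he
      obtain ⟨rfl, rfl⟩ := Prod.mk.inj he
      dsimp only at hx' ⊢
      obtain ⟨hs, h1, h2, hD⟩ := (mem_topTri hT).1 hx
      obtain ⟨hs', -, h2', hD'⟩ := (mem_topTri hT).1 hx'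
      have hr : (p, r) ∈ topEdge A T h :=
        (mem_topEdge hT).2 ⟨T.down_closed hs (by grind) (by simp), h2⟩
      have hr' : (p, r') ∈ topEdge A T h :=
        (mem_topEdge hT).2 ⟨T.down_closed hs' (by grind) (by simp), h2'⟩
      have hqp : q ≠ p := by rintro rfl; linarith
      have hrp : r ≠ p := by rintro rfl; linarith
      have hrp' : r' ≠ p := by rintro rfl; linarith
      have : r = r' := by
        apply eq_of_parallel C hr hT hr'
        by_contra hne
        rcases lt_or_gt_of_ne hne with hlt | hgt
        · refine not_between hT C hs hqp hrp hD ((mem_topEdge hT).1 hr').1 hrp' hD' ?_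
          rw [D_swap]; linarith
        · exact not_between hT C hs' hqp hrp' hD' ((mem_topEdge hT).1 hr).1 hrp hD hgt
      rw [this]
    · rintro ⟨p, q⟩ hx
      obtain ⟨hx, r, hr, hD⟩ := Finset.mem_filter.1 hx
      dsimp only at hr hD
      -- the next downward edge after `(p, q)`
      obtain ⟨s, hs, hmax⟩ := (A.filter fun s => (p, s) ∈ topEdge A T h ∧
        0 < D h k (q - p) (s - p)).exists_max_image (fun s => k (s - p) / h (s - p))
        ⟨r, Finset.mem_filter.2 ⟨faces_subset hT ((mem_topEdge hT).1 hr).1 (by simp), hr, hD⟩⟩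
      obtain ⟨-, hs, hDs⟩ := Finset.mem_filter.1 hs
      refine ⟨(p, q, s), consecutive hT C hx hs hDs ?_, rfl⟩
      intro x hx' h1 h2
      have := hmax x (Finset.mem_filter.2
        ⟨faces_subset hT ((mem_topEdge hT).1 hx').1 (by simp), hx', h1⟩)
      rw [D_pos_iff (lo hx') (lo hs)] at h2
      linarith
  have e3 : ((topEdge A T h).filter
      (fun x => ¬ ∃ r, (x.1, r) ∈ topEdge A T h ∧ 0 < D h k (x.2 - x.1) (r - x.1))).card =
      (A.filter fun p => ∃ a ∈ A, h a < h p).card := by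
    refine Finset.card_bij (fun x _ => x.1) ?_ ?_ ?_
    · rintro ⟨p, q⟩ hx
      obtain ⟨hx, -⟩ := Finset.mem_filter.1 hx
      obtain ⟨hs, h1⟩ := (mem_topEdge hT).1 hx
      have hA := faces_subset hT hs
      exact Finset.mem_filter.2 ⟨hA (by simp), q, hA (by simp), h1⟩
    · rintro ⟨p, q⟩ hx ⟨p', q'⟩ hx' rfl
      obtain ⟨hx, hn⟩ := Finset.mem_filter.1 hx
      obtain ⟨hx', hn'⟩ := Finset.mem_filter.1 hx'
      dsimp only at hn hn' hx'
      have : q = q' := by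
        apply eq_of_parallel C hx hT hx'
        by_contra hne
        rcases lt_or_gt_of_ne hne with hlt | hgt
        · exact hn' ⟨q, hx, by rw [D_swap]; linarith⟩
        · exact hn ⟨q', hx', hgt⟩
      rw [this]
    · intro p hp
      obtain ⟨hp, a, ha, hap⟩ := Finset.mem_filter.1 hp
      obtain ⟨q, hq⟩ := exists_topEdge hT hp ha hap
      -- the last downward edge at `p`
      obtain ⟨s, hs, hmin⟩ := (A.filter fun s => (p, s) ∈ topEdge A T h).exists_min_image
        (fun s => k (s - p) / h (s - p))
        ⟨q, Finset.mem_filter.2 ⟨faces_subset hT ((mem_topEdge hT).1 hq).1 (by simp), hq⟩⟩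
      obtain ⟨-, hs⟩ := Finset.mem_filter.1 hs
      refine ⟨(p, s), Finset.mem_filter.2 ⟨hs, ?_⟩, rfl⟩
      rintro ⟨r, hr, hD⟩
      dsimp only at hr hD
      rw [D_pos_iff (lo hs) (lo hr)] at hD
      have := hmin r (Finset.mem_filter.2
        ⟨faces_subset hT ((mem_topEdge hT).1 hr).1 (by simp), hr⟩)
      linarith
  have e4 := Finset.card_filter_add_card_filter_not (s := A) (fun p => ∃ a ∈ A, h a < h p)
  obtain ⟨m, hm, M, hM, hlt, hm', hM'⟩ := exists_two C hdim
  have e5 : A.filter (fun p => ¬ ∃ a ∈ A, h a < h p) = {m} := by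
    ext p
    simp only [Finset.mem_filter, Finset.mem_singleton]
    constructor
    · rintro ⟨hp, hn⟩
      by_contra hne
      exact hn ⟨m, hm, lt_of_le_of_ne (hm' p hp) fun e => hne (C.gen _ hp _ hm e.symm)⟩
    · rintro rfl
      refine ⟨hm, ?_⟩
      rintro ⟨a, ha, hap⟩
      linarith [hm' a ha]
  rw [e5, Finset.card_singleton] at e4
  omega

end

/-- All but finitely many tilts `m` of the height `x₀ + m x₁` separate the points of `A`. -/
lemma exists_coord (A : Finset Plane) : ∃ h k u, Coord A h k u := by
  classical
  obtain ⟨m, hm⟩ := Infinite.exists_notMem_finset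
    ((A ×ˢ A).image fun x : Plane × Plane => -(x.1 0 - x.2 0) / (x.1 1 - x.2 1))
  let k : Plane →ₗ[ℝ] ℝ := (EuclideanSpace.proj (1 : Fin 2) : Plane →L[ℝ] ℝ).toLinearMap
  let g : Plane →ₗ[ℝ] ℝ := (EuclideanSpace.proj (0 : Fin 2) : Plane →L[ℝ] ℝ).toLinearMap
  have hk : ∀ x, k x = x 1 := fun x => rfl
  have hh : ∀ x, (g + m • k) x = x 0 + m * x 1 := fun x => rfl
  refine ⟨g + m • k, k, !₂[-m, 1], ?_, ?_, ?_, ?_, ?_⟩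
  · intro x h1 h2
    rw [hk] at h2
    rw [hh, h2, mul_zero, add_zero] at h1
    ext i
    fin_cases i
    · exact h1
    · exact h2
  · rw [hh]; simp
  · rw [hk]; simp
  · exact ⟨!₂[1, 0], by rw [hh]; simp⟩
  · intro p hp q hq hpq
    rw [hh, hh] at hpq
    by_cases h1 : p 1 = q 1
    · ext i
      fin_cases i
      · rw [h1] at hpq
        exact add_right_cancel hpq
      · exact h1
    · exfalso
      refine hm (Finset.mem_image.2 ⟨(p, q), Finset.mem_product.2 ⟨hp, hq⟩, ?_⟩)
      dsimp only
      rw [div_eq_iff (sub_ne_zero.2 h1)]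
      linarith

end TriCount

theorem edge_triangle_vertex_counts
    (A : Finset Plane)
    (hdim : affineSpan ℝ (A : Set Plane) = ⊤)
    (T : SimplicialComplex ℝ Plane)
    (hT : IsTriangulation A T)
    (v b e t : ℕ)
    (hv : v = Set.ncard {p : Plane | p ∈ A ∧ p ∈ interior (convexHull ℝ (A : Set Plane))})
    (hb : b = Set.ncard {p : Plane | p ∈ A ∧ p ∈ frontier (convexHull ℝ (A : Set Plane))})
    (he : e = Set.ncard {s : Finset Plane | s ∈ T.faces ∧ s.card = 2})
    (ht : t = Set.ncard {s : Finset Plane | s ∈ T.faces ∧ s.card = 3}) :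
    3 * (t : ℤ) = 2 * (e : ℤ) - (b : ℤ) ∧ 6 * (v : ℤ) + 4 * (b : ℤ) = 6 + 2 * (e : ℤ) := by
  classical
  obtain ⟨h, k, u, C⟩ := TriCount.exists_coord A
  have e1 := TriCount.card_tri_eq hT C hdim
  have e2 := TriCount.card_edge_eq hT C hdim
  rw [← TriCount.card_midTri hT C, ← ht] at e1
  rw [← TriCount.card_topTri hT C, ← TriCount.card_topEdge hT C, ← ht, ← he] at e2
  have e3 := Finset.card_filter_add_card_filter_not (s := A)
    (· ∈ interior (convexHull ℝ (A : Set Plane)))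
  have hv' : v = (A.filter (· ∈ interior (convexHull ℝ (A : Set Plane)))).card := by
    rw [hv, ← Set.ncard_coe_finset]
    congr 1
    ext p; simp
  have hb' : b = (A.filter (¬ · ∈ interior (convexHull ℝ (A : Set Plane)))).card := by
    rw [hb, ← Set.ncard_coe_finset]
    congr 1
    ext p
    simp only [Set.mem_ofPred_eq, Finset.coe_filter]
    refine and_congr_right fun hp => ⟨fun hf => hf.2, fun hn => ⟨?_, hn⟩⟩
    exact subset_closure (subset_convexHull ℝ _ hp)
  rw [← hv'] at e1
  rw [← hv', ← hb'] at e3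
  constructor <;> omega
end
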